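/- arXiv:1808.08431 — 7 statements merged into one kernel-verified Lean document; each statement's English description precedes it below -/
import Mathlib

section
/- Let p(x) = Σ_{j=0}^r b_{α(j)} x^{α(j)} + b_β x^β be a circuit polynomial in n real variables, i.e. 0 ≤ r ≤ n, all b_{α(j)} > 0, all α(j) ∈ (2ℕ)^n, β ∈ ℕ^n, and there exist unique barycentric coordinates λ_0,…,λ_r > 0 with Σ_{j=0}^r λ_j = 1 and β = Σ_{j=0}^r λ_j α(j). If the coefficient of the inner term satisfies |b_β| ≤ Θ_p, where Θ_p = Π_{j=0}^r (b_{α(j)}/λ_j)^{λ_j} is the circuit number, then p(x) ≥ 0 for all x ∈ ℝ^n. -/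
/-- A circuit polynomial
`p(x) = Σ_{j=0}^r b_{α(j)} x^{α(j)} + b_β x^β` (with `0 ≤ r ≤ n`, positive
coefficients `b_{α(j)}`, even exponents `α(j) ∈ (2ℕ)^n`, `β ∈ ℕ^n`, and unique
positive barycentric coordinates `λ_j` with `β = Σ λ_j α(j)`, `Σ λ_j = 1`)
is nonnegative on all of `ℝ^n` provided `|b_β| ≤ Θ_p`, where
`Θ_p = Π_j (b_{α(j)}/λ_j)^{λ_j}` is the circuit number. -/
theorem circuit_polynomial_nonneg_of_abs_le_circuit_number
    (n r : ℕ) (hr : r ≤ n)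
    (α : Fin (r + 1) → Fin n → ℕ) (β : Fin n → ℕ)
    (b : Fin (r + 1) → ℝ) (c : ℝ) (lam : Fin (r + 1) → ℝ)
    (hb : ∀ j, 0 < b j)
    (heven : ∀ j i, Even (α j i))
    (hlam : ∀ j, 0 < lam j)
    (hlamsum : ∑ j, lam j = 1)
    (hbar : ∀ i, (β i : ℝ) = ∑ j, lam j * (α j i : ℝ))
    (huniq : ∀ mu : Fin (r + 1) → ℝ, (∀ j, 0 < mu j) → ∑ j, mu j = 1 →
        (∀ i, (β i : ℝ) = ∑ j, mu j * (α j i : ℝ)) → mu = lam)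
    (hc : |c| ≤ ∏ j, (b j / lam j) ^ lam j) :
    ∀ x : Fin n → ℝ,
      0 ≤ (∑ j, b j * ∏ i, x i ^ α j i) + c * ∏ i, x i ^ β i := by
  intro x
  have key : ∀ j, (∏ i, x i ^ α j i) = ∏ i, |x i| ^ α j i := fun j =>
    Finset.prod_congr rfl fun i _ => ((heven j i).pow_abs (x i)).symm
  have hM : ∀ j, 0 ≤ ∏ i, |x i| ^ α j i := fun j =>
    Finset.prod_nonneg fun i _ => pow_nonneg (abs_nonneg _) _
  have hamgm := Real.geom_mean_le_arith_mean_weighted Finset.univ lam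
    (fun j => (b j / lam j) * ∏ i, |x i| ^ α j i) (fun j _ => (hlam j).le) hlamsum
    (fun j _ => mul_nonneg (div_pos (hb j) (hlam j)).le (hM j))
  have hsum : ∑ j, lam j * ((b j / lam j) * ∏ i, |x i| ^ α j i)
      = ∑ j, b j * ∏ i, x i ^ α j i := by
    refine Finset.sum_congr rfl fun j _ => ?_
    rw [key j, ← mul_assoc, mul_div_cancel₀ _ (hlam j).ne']
  have hmon : ∏ j, (∏ i, |x i| ^ α j i) ^ lam j = |∏ i, x i ^ β i| := by
    rw [Finset.abs_prod]
    have h1 : ∀ j, (∏ i, |x i| ^ α j i) ^ lam j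
        = ∏ i, |x i| ^ (lam j * (α j i : ℝ)) := by
      intro j
      rw [← Real.finsetProd_rpow _ _ (fun i _ => pow_nonneg (abs_nonneg _) _)]
      refine Finset.prod_congr rfl fun i _ => ?_
      rw [← Real.rpow_natCast, ← Real.rpow_mul (abs_nonneg _), mul_comm]
    rw [Finset.prod_congr rfl fun j _ => h1 j, Finset.prod_comm]
    refine Finset.prod_congr rfl fun i _ => ?_
    rw [← Real.rpow_sum_of_nonneg (abs_nonneg _)
      (fun j _ => mul_nonneg (hlam j).le (Nat.cast_nonneg _)), ← hbar i, Real.rpow_natCast,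
      abs_pow]
  have hprod : ∏ j, ((b j / lam j) * ∏ i, |x i| ^ α j i) ^ lam j
      = (∏ j, (b j / lam j) ^ lam j) * |∏ i, x i ^ β i| := by
    rw [← hmon, ← Finset.prod_mul_distrib]
    exact Finset.prod_congr rfl fun j _ =>
      Real.mul_rpow (div_pos (hb j) (hlam j)).le (hM j)
  rw [hprod, hsum] at hamgm
  have h2 := mul_le_mul_of_nonneg_right hc (abs_nonneg (∏ i, x i ^ β i))
  rw [← abs_mul] at h2
  have h3 := neg_abs_le (c * ∏ i, x i ^ β i)
  linarith
end

section
/- Let p(x) = Σ_{j=0}^r b_{α(j)} x^{α(j)} + b_β x^β be a circuit polynomial in n real variables with circuit number Θ_p = Π_{j=0}^r (b_{α(j)}/λ_j)^{λ_j}. If p(x) ≥ 0 for all x ∈ ℝ^n and p is not a sum of monomial squares (i.e. it is not the case that β ∈ (2ℕ)^n and b_β > 0), then |b_β| ≤ Θ_p. -/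
theorem circ_solve (n r : ℕ) (α : Fin (r + 1) → Fin n → ℕ)
    (h : ∀ v : Fin (r + 1) → ℝ, ∑ j, v j = 0 → (∀ i, ∑ j, v j * (α j i : ℝ) = 0) → v = 0)
    (t : Fin (r + 1) → ℝ) :
    ∃ (s : ℝ) (w : Fin n → ℝ), ∀ j, t j = s + ∑ i, w i * (α j i : ℝ) := by
  classical
  let A : Matrix (Option (Fin n)) (Fin (r + 1)) ℝ :=
    Matrix.of fun o j => o.elim 1 (fun i => (α j i : ℝ))
  have hinj : LinearMap.ker (Matrix.toLin' A) = ⊥ := by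
    rw [LinearMap.ker_eq_bot']
    intro v hv
    apply h v
    · have := congrFun hv none
      simpa [A, Matrix.mulVec, dotProduct] using this
    · intro i
      have := congrFun hv (some i)
      simpa [A, Matrix.mulVec, dotProduct, mul_comm] using this
  obtain ⟨g, hg⟩ := LinearMap.exists_leftInverse_of_injective _ hinj
  have hBA : LinearMap.toMatrix' g * A = 1 := by
    have := congrArg LinearMap.toMatrix' hg
    rwa [LinearMap.toMatrix'_comp, LinearMap.toMatrix'_toLin', LinearMap.toMatrix'_id] at this
  let y := Matrix.vecMul t (LinearMap.toMatrix' g)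
  have hy : Matrix.vecMul y A = t := by
    simp only [y]
    rw [Matrix.vecMul_vecMul, hBA, Matrix.vecMul_one]
  refine ⟨y none, fun i => y (some i), fun j => ?_⟩
  have := congrFun hy j
  rw [← this]
  simp [Matrix.vecMul, dotProduct, A, Fintype.sum_option]

theorem circ_indep (n r : ℕ) (α : Fin (r + 1) → Fin n → ℕ) (β : Fin n → ℕ)
    (lam : Fin (r + 1) → ℝ)
    (hlam : ∀ j, 0 < lam j)
    (hlamsum : ∑ j, lam j = 1)
    (hbar : ∀ i, (β i : ℝ) = ∑ j, lam j * (α j i : ℝ))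
    (huniq : ∀ mu : Fin (r + 1) → ℝ, (∀ j, 0 < mu j) → ∑ j, mu j = 1 →
        (∀ i, (β i : ℝ) = ∑ j, mu j * (α j i : ℝ)) → mu = lam)
    (v : Fin (r + 1) → ℝ) (h0 : ∑ j, v j = 0) (h1 : ∀ i, ∑ j, v j * (α j i : ℝ) = 0) :
    v = 0 := by
  have hev : ∀ᶠ e in nhdsWithin (0:ℝ) (Set.Ioi 0), ∀ j, 0 < lam j + e * v j := by
    rw [Filter.eventually_all]
    intro j
    have : Filter.Tendsto (fun e : ℝ => lam j + e * v j) (nhds 0) (nhds (lam j + 0 * v j)) :=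
      Continuous.tendsto (by fun_prop) 0
    apply Filter.Eventually.filter_mono nhdsWithin_le_nhds
    apply this.eventually_const_lt
    simpa using hlam j
  obtain ⟨e, he, hpos⟩ := (hev.and self_mem_nhdsWithin).exists
  have hpos : 0 < e := hpos
  have := huniq (fun j => lam j + e * v j) he
    (by rw [Finset.sum_add_distrib, ← Finset.mul_sum, h0, hlamsum]; simp)
    (by
      intro i
      simp only [add_mul, mul_assoc]
      rw [Finset.sum_add_distrib, ← Finset.mul_sum, h1, hbar]; simp)
  funext j
  have hj := congrFun this j
  simp only [add_eq_left, mul_eq_zero] at hj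
  exact hj.resolve_left hpos.ne'

theorem circ_sign (n : ℕ) (β : Fin n → ℕ) (c : ℝ) (hnotsq : ¬ ((∀ i, Even (β i)) ∧ 0 < c)) :
    ∃ σ : Fin n → ℝ, (∀ i, σ i = 1 ∨ σ i = -1) ∧ c * ∏ i, σ i ^ β i = -|c| := by
  classical
  by_cases hc : 0 < c
  · have : ∃ i, ¬ Even (β i) := by
      by_contra! hh
      exact hnotsq ⟨hh, hc⟩
    obtain ⟨k, hk⟩ := this
    refine ⟨fun i => if i = k then -1 else 1, fun i => ?_, ?_⟩
    · by_cases h : i = k <;> simp [h]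
    · rw [Finset.prod_eq_single k]
      · simp [(Nat.not_even_iff_odd.mp hk).neg_one_pow, abs_of_pos hc]
      · intro i _ hi
        simp [hi]
      · simp
  · exact ⟨fun _ => 1, by simp, by simp [abs_of_nonpos (not_lt.mp hc)]⟩


/-- If a circuit polynomial
`p(x) = Σ_{j=0}^r b_{α(j)} x^{α(j)} + b_β x^β` is nonnegative on `ℝ^n` and is
not a sum of monomial squares (i.e. it is not the case that `β ∈ (2ℕ)^n` and
`b_β > 0`), then `|b_β| ≤ Θ_p`, where `Θ_p = Π_j (b_{α(j)}/λ_j)^{λ_j}` is the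
circuit number. -/
theorem abs_le_circuit_number_of_circuit_polynomial_nonneg
    (n r : ℕ) (hr : r ≤ n)
    (α : Fin (r + 1) → Fin n → ℕ) (β : Fin n → ℕ)
    (b : Fin (r + 1) → ℝ) (c : ℝ) (lam : Fin (r + 1) → ℝ)
    (hb : ∀ j, 0 < b j)
    (heven : ∀ j i, Even (α j i))
    (hlam : ∀ j, 0 < lam j)
    (hlamsum : ∑ j, lam j = 1)
    (hbar : ∀ i, (β i : ℝ) = ∑ j, lam j * (α j i : ℝ))
    (huniq : ∀ mu : Fin (r + 1) → ℝ, (∀ j, 0 < mu j) → ∑ j, mu j = 1 →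
        (∀ i, (β i : ℝ) = ∑ j, mu j * (α j i : ℝ)) → mu = lam)
    (hnonneg : ∀ x : Fin n → ℝ,
      0 ≤ (∑ j, b j * ∏ i, x i ^ α j i) + c * ∏ i, x i ^ β i)
    (hnotsq : ¬ ((∀ i, Even (β i)) ∧ 0 < c)) :
    |c| ≤ ∏ j, (b j / lam j) ^ lam j := by
  obtain ⟨σ, hσ, hσc⟩ := circ_sign n β c hnotsq
  obtain ⟨s, w, hw⟩ := circ_solve n r α
    (circ_indep n r α β lam hlam hlamsum hbar huniq) (fun j => Real.log (lam j / b j))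
  have hmon : ∀ γ : Fin n → ℕ, ∏ i, (σ i * Real.exp (w i)) ^ γ i
      = (∏ i, σ i ^ γ i) * Real.exp (∑ i, w i * (γ i : ℝ)) := by
    intro γ
    simp only [mul_pow]
    rw [Finset.prod_mul_distrib, Real.exp_sum]
    congr 1
    refine Finset.prod_congr rfl fun i _ => ?_
    rw [mul_comm, Real.exp_nat_mul]
  have hx := hnonneg (fun i => σ i * Real.exp (w i))
  simp only [hmon] at hx
  have h1 : ∀ j, b j * ((∏ i, σ i ^ α j i) * Real.exp (∑ i, w i * (α j i : ℝ)))
      = lam j * Real.exp (-s) := by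
    intro j
    have e1 : ∏ i, σ i ^ α j i = 1 := by
      refine Finset.prod_eq_one fun i _ => ?_
      rcases hσ i with h | h <;> simp [h, (heven j i).neg_one_pow]
    have e2 : ∑ i, w i * (α j i : ℝ) = Real.log (lam j / b j) + -s := by
      have := hw j
      linarith
    rw [e1, e2, Real.exp_add, Real.exp_log (div_pos (hlam j) (hb j))]
    have := (hb j).ne'
    field_simp
  have h2 : ∑ i, w i * (β i : ℝ) = -s - ∑ j, lam j * Real.log (b j / lam j) := by
    have e : ∀ j, lam j * Real.log (b j / lam j)
        = -(lam j * s) - ∑ i, w i * (lam j * (α j i : ℝ)) := by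
      intro j
      have := hw j
      rw [← inv_div, Real.log_inv, this, mul_neg, mul_add, Finset.mul_sum, neg_add, sub_eq_add_neg]
      congr 2
      exact Finset.sum_congr rfl fun i _ => by ring
    simp only [e, hbar, Finset.mul_sum]
    rw [Finset.sum_sub_distrib, Finset.sum_neg_distrib, ← Finset.sum_mul, hlamsum,
      Finset.sum_comm]
    ring
  have hΘ : ∏ j, (b j / lam j) ^ lam j = Real.exp (∑ j, lam j * Real.log (b j / lam j)) := by
    rw [Real.exp_sum]
    refine Finset.prod_congr rfl fun j _ => ?_
    rw [Real.rpow_def_of_pos (div_pos (hb j) (hlam j)), mul_comm]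
  simp only [h1] at hx
  rw [← Finset.sum_mul, hlamsum, h2, ← mul_assoc, hσc, Real.exp_sub] at hx
  rw [hΘ]
  set T := Real.exp (∑ j, lam j * Real.log (b j / lam j))
  have hT : 0 < T := Real.exp_pos _
  have hE := Real.exp_pos (-s)
  have : 0 ≤ Real.exp (-s) * (1 - |c| / T) := by
    calc _ ≤ _ := hx
      _ = _ := by ring
  have h3 : |c| / T ≤ 1 := by linarith [nonneg_of_mul_nonneg_right this hE]
  exact (div_le_one hT).mp h3
end

section
/- For every n ∈ ℕ, C_{n,2} ⊆ Σ_{n,2}: every n-variate polynomial of degree at most 2 that is a sum of nonnegative circuit polynomials is a sum of squares of polynomials. -/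
open MvPolynomial

/-- `p` is a circuit polynomial in `n` variables:
`p = Σ_{j=0}^r b_{α(j)} x^{α(j)} + b_β x^β` with `0 ≤ r ≤ n`, positive
coefficients `b_{α(j)}`, even exponents `α(j) ∈ (2ℕ)^n`, `β ∈ ℕ^n`, such that
there exist unique positive barycentric coordinates `λ_j` with
`β = Σ λ_j α(j)` and `Σ λ_j = 1`. -/
def IsCircuitPoly {n : ℕ} (p : MvPolynomial (Fin n) ℝ) : Prop :=
  ∃ r : ℕ, r ≤ n ∧
    ∃ (α : Fin (r + 1) → (Fin n →₀ ℕ)) (β : Fin n →₀ ℕ)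
      (b : Fin (r + 1) → ℝ) (c : ℝ) (lam : Fin (r + 1) → ℝ),
      (∀ j, 0 < b j) ∧ (∀ j i, Even (α j i)) ∧
      (∀ j, 0 < lam j) ∧ (∑ j, lam j = 1) ∧
      (∀ i, (β i : ℝ) = ∑ j, lam j * (α j i : ℝ)) ∧
      (∀ mu : Fin (r + 1) → ℝ, (∀ j, 0 < mu j) → ∑ j, mu j = 1 →
        (∀ i, (β i : ℝ) = ∑ j, mu j * (α j i : ℝ)) → mu = lam) ∧
      p = (∑ j, monomial (α j) (b j)) + monomial β c

/-- `p` is a sum of nonnegative circuit polynomials. -/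
def IsSONC {n : ℕ} (p : MvPolynomial (Fin n) ℝ) : Prop :=
  ∃ (k : ℕ) (q : Fin k → MvPolynomial (Fin n) ℝ),
    (∀ m, IsCircuitPoly (q m) ∧ ∀ x : Fin n → ℝ, 0 ≤ eval x (q m)) ∧
    p = ∑ m, q m

/-- `C_{n,2d}`: the polynomials of degree at most `2d` in `n` variables that
are sums of nonnegative circuit polynomials. -/
def SONCCone (n d : ℕ) : Set (MvPolynomial (Fin n) ℝ) :=
  {p | p.totalDegree ≤ 2 * d ∧ IsSONC p}

/-- `Σ_{n,2d}`: the polynomials of degree at most `2d` in `n` variables that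
are finite sums of squares of polynomials. -/
def SOSCone (n d : ℕ) : Set (MvPolynomial (Fin n) ℝ) :=
  {p | p.totalDegree ≤ 2 * d ∧
    ∃ (k : ℕ) (s : Fin k → MvPolynomial (Fin n) ℝ), p = ∑ m, s m ^ 2}

/-- `P_{n,2d}`: the polynomials of degree at most `2d` in `n` variables that
are nonnegative on all of `ℝ^n`. -/
def PosCone (n d : ℕ) : Set (MvPolynomial (Fin n) ℝ) :=
  {p | p.totalDegree ≤ 2 * d ∧ ∀ x : Fin n → ℝ, 0 ≤ eval x p}

noncomputable def zvar {n : ℕ} : Option (Fin n) → MvPolynomial (Fin n) ℝ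
  | none => 1
  | some i => X i

lemma mono_split {n : ℕ} (d : ℕ) (m : Fin n →₀ ℕ) (h : m.degree ≤ d + 1) :
    ∃ (i : Option (Fin n)) (m' : Fin n →₀ ℕ), m'.degree ≤ d ∧
      (monomial m (1:ℝ)) = zvar i * monomial m' 1 := by
  by_cases hm : m = 0
  · exact ⟨none, 0, by simp, by simp [zvar, hm]⟩
  · obtain ⟨i, hi⟩ := Finsupp.ne_iff.mp hm
    have hle : Finsupp.single i 1 ≤ m := by
      rw [Finsupp.single_le_iff]
      exact Nat.one_le_iff_ne_zero.mpr hi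
    have he : Finsupp.single i 1 + (m - Finsupp.single i 1) = m := add_tsub_cancel_of_le hle
    refine ⟨some i, m - Finsupp.single i 1, ?_, ?_⟩
    · have := congrArg Finsupp.degree he
      rw [map_add, Finsupp.degree_single] at this
      omega
    · conv_lhs => rw [← he]
      simp [zvar, X, monomial_mul]

lemma quad_repr {n : ℕ} (p : MvPolynomial (Fin n) ℝ) (h : p.totalDegree ≤ 2) :
    ∃ M : Matrix (Option (Fin n)) (Option (Fin n)) ℝ,
      p = ∑ i, ∑ j, C (M i j) * (zvar i * zvar j) := by
  have key : ∀ m ∈ p.support, ∃ i j : Option (Fin n),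
      monomial m (coeff m p) = C (coeff m p) * (zvar i * zvar j) := by
    intro m hm
    have hd : m.degree ≤ 1 + 1 := by
      have := le_totalDegree hm
      rw [Finsupp.degree_eq_sum]
      rw [Finsupp.sum_fintype _ _ (by simp)] at this
      omega
    obtain ⟨i, m1, h1, e1⟩ := mono_split 1 m hd
    obtain ⟨j, m2, h2, e2⟩ := mono_split 0 m1 h1
    have : m2 = 0 := (Finsupp.degree_eq_zero_iff m2).mp (Nat.le_zero.mp h2)
    subst this
    refine ⟨i, j, ?_⟩
    rw [show monomial m (coeff m p) = C (coeff m p) * monomial m 1 by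
      rw [C_mul_monomial, mul_one], e1, e2]
    simp
  choose! f g hfg using key
  refine ⟨fun i j => ∑ m ∈ p.support, if f m = i then (if g m = j then coeff m p else 0) else 0, ?_⟩
  conv_lhs => rw [p.as_sum]
  simp only [map_sum, Finset.sum_mul]
  rw [Finset.sum_congr rfl (fun i _ => Finset.sum_comm), Finset.sum_comm]
  refine Finset.sum_congr rfl fun m hm => ?_
  rw [hfg m hm, Finset.sum_eq_single (f m), Finset.sum_eq_single (g m)]
  · simp
  · intro b _ hb; simp [hb.symm]
  · simp
  · intro b _ hb; simp [hb.symm]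
  · simp

open scoped MatrixOrder in
lemma nonneg_quad_sos {n : ℕ} (p : MvPolynomial (Fin n) ℝ) (h : p.totalDegree ≤ 2)
    (hp : ∀ x : Fin n → ℝ, 0 ≤ eval x p) :
    ∃ (k : ℕ) (s : Fin k → MvPolynomial (Fin n) ℝ), p = ∑ m, s m ^ 2 := by
  obtain ⟨M, hM⟩ := quad_repr p h
  have nz : ∀ v : Option (Fin n) → ℝ, v none ≠ 0 → 0 ≤ ∑ i, ∑ j, M i j * (v i * v j) := by
    intro v hv
    have h1 := hp (fun i => v (some i) / v none)
    have h2 : ∀ i : Option (Fin n),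
        eval (fun i => v (some i) / v none) (zvar i) = v i / v none := by
      rintro (_ | i) <;> simp [zvar, hv]
    rw [hM] at h1
    simp only [map_sum, map_mul, eval_C, h2] at h1
    have h3 : ∑ i, ∑ j, M i j * (v i * v j)
        = v none ^ 2 * ∑ i, ∑ j, M i j * (v i / v none * (v j / v none)) := by
      simp only [Finset.mul_sum]
      refine Finset.sum_congr rfl fun i _ => Finset.sum_congr rfl fun j _ => ?_
      field_simp
    rw [h3]
    positivity
  have all : ∀ v : Option (Fin n) → ℝ, 0 ≤ ∑ i, ∑ j, M i j * (v i * v j) := by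
    intro v
    by_cases hv : v none = 0
    · have hc : Continuous (fun t : ℝ => ∑ i, ∑ j, M i j *
          (Function.update v none t i * Function.update v none t j)) := by
        have : ∀ i, Continuous (fun t : ℝ => Function.update v none t i) := fun i =>
          (continuous_apply i).comp
            ((continuous_const (y := v)).update none continuous_id)
        fun_prop
      have ht := (hc.tendsto 0).mono_left (nhdsWithin_le_nhds (s := {0}ᶜ))
      have hv' : Function.update v none 0 = v := by rw [← hv]; simp
      rw [hv'] at ht
      refine ge_of_tendsto ht ?_
      filter_upwards [self_mem_nhdsWithin] with t ht
      exact nz _ (by simpa using ht)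
    · exact nz v hv
  have comm : ∀ {R : Type} [CommRing R] (N : Option (Fin n) → Option (Fin n) → R)
      (v : Option (Fin n) → R),
      ∑ i, ∑ j, N j i * (v i * v j) = ∑ i, ∑ j, N i j * (v i * v j) := by
    intro R _ N v
    rw [Finset.sum_comm]
    simp only [mul_comm]
  let Q : Matrix (Option (Fin n)) (Option (Fin n)) ℝ := fun i j => (1/2) * M i j + (1/2) * M j i
  have hQp : p = ∑ i, ∑ j, C (Q i j) * (zvar i * zvar j) := by
    simp only [Q, map_add, map_mul, add_mul, Finset.sum_add_distrib, mul_assoc, ← Finset.mul_sum]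
    rw [comm (fun i j => C (M i j)) zvar, ← hM, ← add_mul, ← map_add]
    norm_num
  have hQ : Q.PosSemidef := by
    refine Matrix.PosSemidef.of_dotProduct_mulVec_nonneg ?_ ?_
    · ext i j; rw [Matrix.conjTranspose_apply, star_trivial]; simp only [Q]; ring
    · intro v
      have := all v
      have e : star v ⬝ᵥ Q.mulVec v = ∑ i, ∑ j, Q i j * (v i * v j) := by
        simp only [dotProduct, Matrix.mulVec, Finset.mul_sum, star_trivial]
        refine Finset.sum_congr rfl fun i _ => Finset.sum_congr rfl fun j _ => ?_
        ring
      rw [e]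
      simp only [Q, add_mul, Finset.sum_add_distrib, mul_assoc, ← Finset.mul_sum]
      rw [comm M v]
      linarith
  obtain ⟨B, hB⟩ := CStarAlgebra.nonneg_iff_eq_star_mul_self.mp hQ.nonneg
  have hs : p = ∑ k, (∑ i, C (B k i) * zvar i) ^ 2 := by
    rw [hQp, hB, Matrix.star_eq_conjTranspose]
    simp only [Matrix.mul_apply, Matrix.conjTranspose_apply, star_trivial, map_sum, map_mul,
      Finset.sum_mul, sq, Finset.mul_sum]
    rw [Finset.sum_congr rfl (fun i _ => Finset.sum_comm), Finset.sum_comm]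
    refine Finset.sum_congr rfl fun k _ => ?_
    rw [Finset.sum_comm]
    refine Finset.sum_congr rfl fun i _ => Finset.sum_congr rfl fun j _ => ?_
    ring
  refine ⟨_, fun m => (∑ i, C (B ((Fintype.equivFin _).symm m) i) * zvar i), ?_⟩
  rw [hs]
  exact ((Fintype.equivFin (Option (Fin n))).symm.sum_comp
    (fun k => (∑ i, C (B k i) * zvar i) ^ 2)).symm

/-- For every `n ∈ ℕ`, `C_{n,2} ⊆ Σ_{n,2}`: every `n`-variate
polynomial of degree at most `2` that is a sum of nonnegative circuit
polynomials is a sum of squares of polynomials. -/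
theorem SONCCone_subset_SOSCone_degree_two (n : ℕ) :
    SONCCone n 1 ⊆ SOSCone n 1 := by
  rintro p ⟨hd, k, q, hq, rfl⟩
  refine ⟨hd, nonneg_quad_sos _ hd fun x => ?_⟩
  rw [map_sum]
  exact Finset.sum_nonneg fun m _ => (hq m).2 x
end

section
/- C_{2,4} ⊆ Σ_{2,4}: every bivariate polynomial of degree at most 4 that is a sum of nonnegative circuit polynomials is a sum of squares of polynomials. -/
open MvPolynomial

namespace SoncAux

open Filter Topology

/-- x-coordinates of the half exponents. -/
def tx : Fin 6 → ℤ := ![0, 1, 0, 2, 1, 0]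

/-- y-coordinates of the half exponents. -/
def ty : Fin 6 → ℤ := ![0, 0, 1, 0, 1, 2]

theorem comb2 : ∀ p q r : Fin 6,
    ((tx q - tx p)*(ty r - ty p) - (tx r - tx p)*(ty q - ty p)) ≠ 0 → ∀ X Y : Fin 5,
    0 < ((tx q - tx p)*(ty r - ty p) - (tx r - tx p)*(ty q - ty p)) *
      ((2*tx q - (X:ℕ))*(2*ty r - (Y:ℕ)) - (2*tx r - (X:ℕ))*(2*ty q-(Y:ℕ))) →
    0 < ((tx q - tx p)*(ty r - ty p) - (tx r - tx p)*(ty q - ty p)) *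
      ((2*tx r - (X:ℕ))*(2*ty p - (Y:ℕ)) - (2*tx p - (X:ℕ))*(2*ty r-(Y:ℕ))) →
    0 < ((tx q - tx p)*(ty r - ty p) - (tx r - tx p)*(ty q - ty p)) *
      ((2*tx p - (X:ℕ))*(2*ty q - (Y:ℕ)) - (2*tx q - (X:ℕ))*(2*ty p-(Y:ℕ))) →
    ∃ k i j : Fin 3,
      ![tx p, tx q, tx r] i + ![tx p, tx q, tx r] j + 2 * ![tx p, tx q, tx r] k = 2 * (X:ℕ) ∧
      ![ty p, ty q, ty r] i + ![ty p, ty q, ty r] j + 2 * ![ty p, ty q, ty r] k = 2 * (Y:ℕ) := by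
  decide +kernel

theorem comb1 : ∀ p q : Fin 6, ∀ X Y : Fin 5,
    (tx q - tx p) * ((Y:ℕ) - 2 * ty p) = (ty q - ty p) * ((X:ℕ) - 2 * tx p) →
    0 < (tx q - tx p) * ((X:ℕ) - 2 * tx p) + (ty q - ty p) * ((Y:ℕ) - 2 * ty p) →
    (tx q - tx p) * ((X:ℕ) - 2 * tx p) + (ty q - ty p) * ((Y:ℕ) - 2 * ty p) <
      2 * ((tx q - tx p)*(tx q - tx p) + (ty q - ty p)*(ty q - ty p)) →
    ∃ k i j : Fin 2,
      ![tx p, tx q] i + ![tx p, tx q] j + 2 * ![tx p, tx q] k = 2 * (X:ℕ) ∧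
      ![ty p, ty q] i + ![ty p, ty q] j + 2 * ![ty p, ty q] k = 2 * (Y:ℕ) := by
  decide +kernel

theorem pt_exists (x y : ℕ) (h : x + y ≤ 2) : ∃ p : Fin 6, tx p = x ∧ ty p = y := by
  have hx : x ≤ 2 := by omega
  have hy : y ≤ 2 := by omega
  interval_cases x <;> interval_cases y <;> first | (exfalso; omega) | decide

/-! ### Univariate growth -/

theorem uni_degree (P Q : Polynomial ℝ) (h0 : ∀ t, 0 ≤ Q.eval t) (h1 : ∀ t, Q.eval t ≤ P.eval t) :
    Q.degree ≤ P.degree := by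
  by_contra! h
  have ht := Polynomial.div_tendsto_atTop_zero_of_degree_lt P Q h
  have hQ : Q ≠ 0 := by rintro rfl; simp at h
  have e1 := ht.eventually (gt_mem_nhds (show (0:ℝ) < 1 by norm_num))
  have e2 : ∀ᶠ t in atTop, ¬ Q.IsRoot t := Polynomial.eventually_atTop_not_isRoot Q hQ
  obtain ⟨t, ht1, ht2⟩ := (e1.and e2).exists
  have hpos : 0 < Q.eval t := lt_of_le_of_ne (h0 t) (Ne.symm ht2)
  rw [div_lt_one hpos] at ht1
  linarith [h1 t]

/-- restriction to the ray through `z`. -/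
noncomputable def ray {n : ℕ} (z : Fin n → ℝ) : MvPolynomial (Fin n) ℝ →ₐ[ℝ] Polynomial ℝ :=
  aeval (fun i => Polynomial.C (z i) * Polynomial.X)

theorem ray_eval {n : ℕ} (z : Fin n → ℝ) (q : MvPolynomial (Fin n) ℝ) (t : ℝ) :
    (ray z q).eval t = eval (fun i => z i * t) q := by
  induction q using MvPolynomial.induction_on with
  | C a => simp [ray, Polynomial.algebraMap_apply]
  | add p q hp hq => simp [hp, hq]
  | mul_X p i hp => simp [hp]; simp [ray]

theorem ray_coeff {n : ℕ} (z : Fin n → ℝ) (q : MvPolynomial (Fin n) ℝ) (k : ℕ) :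
    (ray z q).coeff k = eval z (homogeneousComponent k q) := by
  induction q using MvPolynomial.induction_on' with
  | monomial d a =>
    have h1 : ray z (monomial d a) = Polynomial.monomial d.degree (eval z (monomial d a)) := by
      rw [ray, aeval_monomial, eval_monomial, Finsupp.prod_fintype _ _ (by simp),
        Finsupp.prod_fintype _ _ (by simp), Finsupp.degree_eq_sum, ← Polynomial.C_mul_X_pow_eq_monomial]
      simp [mul_pow, Finset.prod_mul_distrib, Finset.prod_pow_eq_pow_sum, Polynomial.algebraMap_apply,
        mul_assoc]
    rw [h1, homogeneousComponent_of_mem (isHomogeneous_monomial a rfl), Polynomial.coeff_monomial]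
    by_cases h : k = d.degree
    · simp [h]
    · simp [h, Ne.symm h]
  | add p q hp hq => simp [hp, hq]

theorem degree_bound {n N : ℕ} (p q : MvPolynomial (Fin n) ℝ) (hp : p.totalDegree ≤ N)
    (h0 : ∀ x, 0 ≤ eval x q) (h1 : ∀ x, eval x q ≤ eval x p) (d : Fin n →₀ ℕ)
    (hd : coeff d q ≠ 0) : d.degree ≤ N := by
  by_contra! h
  have hz : homogeneousComponent d.degree q = 0 := by
    apply MvPolynomial.funext
    intro z
    rw [← ray_coeff, map_zero]
    apply Polynomial.coeff_eq_zero_of_degree_lt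
    refine lt_of_le_of_lt (uni_degree (ray z p) (ray z q) ?_ ?_) ?_
    · intro t; rw [ray_eval]; exact h0 _
    · intro t; rw [ray_eval, ray_eval]; exact h1 _
    · rw [Polynomial.degree_lt_iff_coeff_zero]
      intro m hm
      rw [ray_coeff, homogeneousComponent_eq_zero _ _ (by omega), map_zero]
  have := coeff_homogeneousComponent d.degree q d
  rw [hz] at this
  simp at this
  exact hd this.symm

/-! ### Linear algebra -/

/-- affine independence. -/
def AI {n r : ℕ} (α : Fin (r + 1) → (Fin n →₀ ℕ)) : Prop :=
  ∀ mu : Fin (r + 1) → ℝ, ∑ j, mu j = 0 → (∀ i, ∑ j, mu j * (α j i : ℝ) = 0) → mu = 0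

theorem ai_of_unique {n r : ℕ} (α : Fin (r + 1) → (Fin n →₀ ℕ)) (β : Fin n →₀ ℕ)
    (lam : Fin (r + 1) → ℝ) (hpos : ∀ j, 0 < lam j) (hsum : ∑ j, lam j = 1)
    (hb : ∀ i, (β i : ℝ) = ∑ j, lam j * (α j i : ℝ))
    (hu : ∀ mu : Fin (r + 1) → ℝ, (∀ j, 0 < mu j) → ∑ j, mu j = 1 →
        (∀ i, (β i : ℝ) = ∑ j, mu j * (α j i : ℝ)) → mu = lam) : AI α := by
  intro mu h0 h1
  have hev : ∀ᶠ t : ℝ in 𝓝[>] 0, ∀ j, 0 < lam j + t * mu j := by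
    rw [eventually_all]
    intro j
    apply Filter.Eventually.filter_mono nhdsWithin_le_nhds
    have : Tendsto (fun t : ℝ => lam j + t * mu j) (𝓝 0) (𝓝 (lam j + 0 * mu j)) := by
      apply Continuous.tendsto; fun_prop
    apply this.eventually (lt_mem_nhds _)
    simpa using hpos j
  obtain ⟨t, ht, htpos⟩ := (hev.and self_mem_nhdsWithin).exists
  have := hu (fun j => lam j + t * mu j) ht
    (by rw [Finset.sum_add_distrib, ← Finset.mul_sum, h0, hsum]; ring)
    (by
      intro i
      simp only [add_mul, mul_assoc]
      rw [Finset.sum_add_distrib, ← Finset.mul_sum, h1, ← hb]; ring)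
  funext j
  have hj := congrFun this j
  have htpos' : (0:ℝ) < t := htpos
  simp at hj
  rcases hj with h | h
  · exact absurd h htpos'.ne'
  · simpa using h

theorem ai_eq {n r : ℕ} {α : Fin (r + 1) → (Fin n →₀ ℕ)} (h : AI α) (mu lam : Fin (r + 1) → ℝ)
    (hs : ∑ j, mu j = ∑ j, lam j)
    (hb : ∀ i, ∑ j, mu j * (α j i : ℝ) = ∑ j, lam j * (α j i : ℝ)) : mu = lam := by
  have := h (mu - lam) (by simp [hs]) (by intro i; simp [sub_mul, hb])
  exact sub_eq_zero.1 this

theorem ai_solve {n r : ℕ} {α : Fin (r + 1) → (Fin n →₀ ℕ)} (h : AI α) (v : Fin (r + 1) → ℝ) :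
    ∃ (s : Fin n → ℝ) (k : ℝ), ∀ j, k - ∑ i, (α j i : ℝ) * s i = v j := by
  let f : ((Fin n → ℝ) × ℝ) →ₗ[ℝ] (Fin (r + 1) → ℝ) :=
    { toFun := fun p j => p.2 - ∑ i, (α j i : ℝ) * p.1 i
      map_add' := by
        intro p q; funext j; simp [mul_add, Finset.sum_add_distrib]; ring
      map_smul' := by
        intro c p; funext j
        simp [mul_sub, Finset.mul_sum, mul_left_comm] }
  have hf : LinearMap.range f = ⊤ := by
    by_contra hne
    obtain ⟨φ, hφ, hle⟩ := Submodule.exists_le_ker_of_lt_top _ (lt_top_iff_ne_top.2 hne)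
    apply hφ
    have hφs : ∀ w, φ w = ∑ j, w j * φ (fun i => if j = i then 1 else 0) := by
      intro w
      simpa using LinearMap.pi_apply_eq_sum_univ φ w
    set mu : Fin (r + 1) → ℝ := fun j => φ (fun i => if j = i then 1 else 0) with hmu
    have hk : ∀ p, φ (f p) = 0 := fun p => hle ⟨p, rfl⟩
    have hm : mu = 0 := by
      apply h
      · have := hk (0, 1)
        rw [hφs] at this
        simpa [f] using this
      · intro i
        have := hk (Pi.single i 1, 0)
        rw [hφs] at this
        simp [f, Pi.single_apply] at this
        simpa [hmu, mul_comm] using this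
    ext w
    have hw := hφs (Pi.single w 1)
    have : ∀ j, φ (fun i => if j = i then 1 else 0) = 0 := fun j => congrFun hm j
    simp [this] at hw
    simpa using hw
  obtain ⟨⟨s, k⟩, hp⟩ := LinearMap.range_eq_top.1 hf v
  exact ⟨s, k, fun j => congrFun hp j⟩

/-! ### Scaled monomials -/

/-- scaled monomial -/
noncomputable def M {n : ℕ} (s : Fin n → ℝ) (d : Fin n →₀ ℕ) : MvPolynomial (Fin n) ℝ :=
  monomial d (Real.exp (-∑ i, (d i : ℝ) * s i))

theorem M_add {n : ℕ} (s : Fin n → ℝ) (d e : Fin n →₀ ℕ) : M s (d + e) = M s d * M s e := by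
  simp only [M, monomial_mul, ← Real.exp_add]
  congr 2
  simp [add_mul, Finset.sum_add_distrib]; ring

theorem M_eval {n : ℕ} (s ε : Fin n → ℝ) (d : Fin n →₀ ℕ) :
    eval (fun i => ε i * Real.exp (s i)) (M s d) = ∏ i, ε i ^ d i := by
  rw [M, eval_monomial, Finsupp.prod_fintype _ _ (by simp)]
  simp only [mul_pow, Finset.prod_mul_distrib, ← Real.exp_nat_mul]
  rw [← Real.exp_sum, mul_left_comm, ← Real.exp_add]
  simp

theorem sumSq_C_mul {n : ℕ} {a : ℝ} (ha : 0 ≤ a) {q : MvPolynomial (Fin n) ℝ} (hq : IsSumSq q) :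
    IsSumSq (C a * q) := by
  refine IsSumSq.mul ?_ hq
  have : (C a : MvPolynomial (Fin n) ℝ) = C (√a) * C (√a) := by
    rw [← C_mul, Real.mul_self_sqrt ha]
  rw [this]
  exact IsSumSq.mul_self _

theorem M_even {n : ℕ} (s : Fin n → ℝ) (d : Fin n →₀ ℕ) (h : ∀ i, Even (d i)) :
    IsSumSq (M s d) := by
  have : ∃ e : Fin n →₀ ℕ, d = e + e := by
    choose e he using h
    exact ⟨Finsupp.equivFunOnFinite.symm e, by ext i; simp [he]⟩
  obtain ⟨e, rfl⟩ := this
  rw [M_add]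
  exact IsSumSq.mul_self _

/-- the core sum of squares argument -/
theorem core {n r : ℕ} (q : MvPolynomial (Fin n) ℝ) (hq : ∀ x, 0 ≤ eval x q)
    (α : Fin (r + 1) → (Fin n →₀ ℕ)) (β : Fin n →₀ ℕ)
    (b : Fin (r + 1) → ℝ) (c : ℝ) (lam : Fin (r + 1) → ℝ)
    (hb : ∀ j, 0 < b j) (hev : ∀ j i, Even (α j i)) (hpos : ∀ j, 0 < lam j)
    (hsum : ∑ j, lam j = 1) (hbar : ∀ i, (β i : ℝ) = ∑ j, lam j * (α j i : ℝ))
    (hai : AI α) (hqe : q = (∑ j, monomial (α j) (b j)) + monomial β c)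
    (a : Fin (r + 1) → (Fin n →₀ ℕ)) (ha : ∀ j, α j = a j + a j)
    (hcomb : ∃ k i j, ∀ l, a i l + a j l + 2 * a k l = 2 * β l) : IsSumSq q := by
  obtain ⟨s, κ, hs⟩ := ai_solve hai (fun j => Real.log (b j / lam j))
  set B := Real.exp κ with hB
  have hBpos : 0 < B := Real.exp_pos _
  have hbj : ∀ j, monomial (α j) (b j) = C (B * lam j) * M s (α j) := by
    intro j
    rw [M, C_mul_monomial]
    congr 1
    have h1 := congrArg Real.exp (hs j)
    rw [Real.exp_log (div_pos (hb j) (hpos j)), sub_eq_add_neg, Real.exp_add, eq_div_iff (hpos j).ne'] at h1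
    rw [← h1]; ring
  obtain ⟨c', hc'⟩ : ∃ c', monomial β c = C c' * M s β := by
    refine ⟨c * Real.exp (∑ i, (β i : ℝ) * s i), ?_⟩
    rw [M, C_mul_monomial, mul_assoc, ← Real.exp_add]
    simp
  have hqe2 : q = C B * (∑ j, C (lam j) * M s (α j)) + C c' * M s β := by
    rw [hqe, hc', Finset.mul_sum]
    congr 1
    apply Finset.sum_congr rfl
    intro j _
    rw [hbj, C_mul, mul_assoc]
  have hA : IsSumSq (∑ j, C (lam j) * M s (α j)) :=
    IsSumSq.sum fun j _ => sumSq_C_mul (hpos j).le (M_even s _ (hev j))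
  have hval : ∀ ε : Fin n → ℝ, (∀ i, ε i ^ 2 = 1) → 0 ≤ B + c' * ∏ i, ε i ^ β i := by
    intro ε hε
    have h1 := hq (fun i => ε i * Real.exp (s i))
    rw [hqe2] at h1
    simp only [map_add, map_mul, eval_C, M_eval, map_sum] at h1
    have h2 : ∀ j, ∏ i, ε i ^ α j i = 1 := by
      intro j
      apply Finset.prod_eq_one
      intro i _
      obtain ⟨e, he⟩ := hev j i
      rw [he, ← two_mul, pow_mul, hε, one_pow]
    simpa [h2, hsum] using h1
  have hlow : -B ≤ c' := by
    have := hval (fun _ => 1) (by simp)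
    simp at this
    linarith
  by_cases hc0 : (∀ i, Even (β i)) ∧ 0 ≤ c'
  · rw [hqe2]
    exact (sumSq_C_mul hBpos.le hA).add (sumSq_C_mul hc0.2 (M_even s _ hc0.1))
  have hup : c' ≤ B := by
    by_cases hc1 : 0 ≤ c'
    · have : ∃ i, ¬ Even (β i) := by
        by_contra! hcon
        exact hc0 ⟨hcon, hc1⟩
      obtain ⟨i, hi⟩ := this
      have h3 := hval (fun l => if l = i then -1 else 1) (by intro l; split_ifs <;> norm_num)
      have h4 : ∏ l, (if l = i then (-1:ℝ) else 1) ^ β l = -1 := by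
        rw [Finset.prod_eq_single i]
        · simp [Odd.neg_one_pow (Nat.not_even_iff_odd.1 hi)]
        · intro l _ hl; simp [hl]
        · simp
      rw [h4] at h3
      linarith
    · linarith
  obtain ⟨k, i, j, hkij⟩ := hcomb
  -- identify lam
  have hlam : lam = fun l => (if l = i then 1/4 else 0) + (if l = j then 1/4 else 0)
      + (if l = k then 1/2 else 0) := by
    symm
    apply ai_eq hai
    · rw [hsum]
      simp only [Finset.sum_add_distrib, Finset.sum_ite_eq', Finset.mem_univ, if_true]
      norm_num
    · intro l
      rw [← hbar]
      simp only [add_mul, ite_mul, zero_mul, Finset.sum_add_distrib, Finset.sum_ite_eq', Finset.mem_univ, if_true]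
      have := hkij l
      have h5 : (a i l : ℝ) + a j l + 2 * a k l = 2 * β l := by exact_mod_cast this
      simp only [ha, Finsupp.add_apply, Nat.cast_add]
      linarith
  have hAe : ∑ j, C (lam j) * M s (α j) = C (1/4) * (M s (a i) * M s (a i))
      + C (1/4) * (M s (a j) * M s (a j)) + C (1/2) * (M s (a k) * M s (a k)) := by
    rw [hlam]
    simp only [C_add, add_mul, Finset.sum_add_distrib, apply_ite (C (R := ℝ) (σ := Fin n)), C_0, ite_mul, zero_mul,
      Finset.sum_ite_eq', Finset.mem_univ, if_true]
    simp only [ha, M_add]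
  have hm : ∃ m : Fin n →₀ ℕ, β = m + a k ∧ m + m = a i + a j := by
    refine ⟨β - a k, ?_, ?_⟩
    · ext l
      have := hkij l
      simp
      omega
    · ext l
      have := hkij l
      simp
      omega
  obtain ⟨m, hm1, hm2⟩ := hm
  have hMm : M s m * M s m = M s (a i) * M s (a j) := by
    rw [← M_add, ← M_add, hm2]
  have hC : (C (1/2) : MvPolynomial (Fin n) ℝ) = C (1/4) + C (1/4) := by rw [← C_add]; norm_num
  have hC1 : (1 : MvPolynomial (Fin n) ℝ) = C (1/4) + C (1/4) + C (1/4) + C (1/4) := by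
    rw [← C_add, ← C_add, ← C_add, ← C_1]; norm_num
  have key : ∀ e : MvPolynomial (Fin n) ℝ, e * e = 1 →
      IsSumSq ((∑ j, C (lam j) * M s (α j)) + e * M s β) := by
    intro e he
    have : (∑ j, C (lam j) * M s (α j)) + e * M s β =
        C (1/4) * ((M s (a i) - M s (a j)) * (M s (a i) - M s (a j)))
        + C (1/2) * ((M s m + e * M s (a k)) * (M s m + e * M s (a k))) := by
      rw [hAe, hm1, M_add, hC]
      linear_combination (-2 * C (1/4)) * hMm + (-2 * C (1/4) * M s (a k) * M s (a k)) * he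
         + (e * M s m * M s (a k)) * hC1
    rw [this]
    exact (sumSq_C_mul (by norm_num) (IsSumSq.mul_self _)).add
      (sumSq_C_mul (by norm_num) (IsSumSq.mul_self _))
  by_cases hc1 : 0 ≤ c'
  · have : q = C (B - c') * (∑ j, C (lam j) * M s (α j))
        + C c' * ((∑ j, C (lam j) * M s (α j)) + 1 * M s β) := by
      rw [hqe2, C_sub]; ring
    rw [this]
    exact (sumSq_C_mul (by linarith) hA).add (sumSq_C_mul hc1 (key 1 (by ring)))
  · have : q = C (B + c') * (∑ j, C (lam j) * M s (α j))
        + C (-c') * ((∑ j, C (lam j) * M s (α j)) + (-1) * M s β) := by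
      rw [hqe2, C_add, C_neg]; ring
    rw [this]
    exact (sumSq_C_mul (by linarith) hA).add (sumSq_C_mul (by linarith) (key (-1) (by ring)))

theorem comb {r : ℕ} (hr : r ≤ 2)
    (α : Fin (r + 1) → (Fin 2 →₀ ℕ)) (β : Fin 2 →₀ ℕ) (lam : Fin (r + 1) → ℝ)
    (hpos : ∀ j, 0 < lam j)
    (hsum : ∑ j, lam j = 1) (hbar : ∀ i, (β i : ℝ) = ∑ j, lam j * (α j i : ℝ))
    (hai : AI α)
    (a : Fin (r + 1) → (Fin 2 →₀ ℕ)) (ha : ∀ j, α j = a j + a j)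
    (hdeg : 1 ≤ r → ∀ j, a j 0 + a j 1 ≤ 2) :
    ∃ k i j, ∀ l, a i l + a j l + 2 * a k l = 2 * β l := by
  have hbar' : ∀ i, (β i : ℝ) = ∑ j, lam j * (2 * (a j i : ℝ)) := by
    intro i
    rw [hbar]
    apply Finset.sum_congr rfl
    intro j _
    rw [ha, Finsupp.add_apply, Nat.cast_add]; ring
  have hβ : 1 ≤ r → ∀ i, β i < 5 := by
    intro h i
    have h1 : (β i : ℝ) ≤ ∑ j, lam j * 4 := by
      rw [hbar']
      apply Finset.sum_le_sum
      intro j _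
      have h2 : a j i ≤ 2 := by
        have := hdeg h j
        fin_cases i <;> simp <;> omega
      have h3 : (a j i : ℝ) ≤ 2 := by exact_mod_cast h2
      have := hpos j
      gcongr
      linarith
    rw [← Finset.sum_mul, hsum, one_mul] at h1
    have : β i ≤ 4 := by exact_mod_cast h1
    omega
  have hai' : ∀ mu : Fin (r + 1) → ℝ, ∑ j, mu j = 0 → (∀ i, ∑ j, mu j * (a j i : ℝ) = 0) →
      mu = 0 := by
    intro mu h0 h1
    apply hai mu h0
    intro i
    simp [ha, mul_add, Finset.sum_add_distrib, h1]
  clear hbar hai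
  have hX := hbar' 0
  have hY := hbar' 1
  interval_cases r
  · refine ⟨0, 0, 0, fun l => ?_⟩
    have := hbar' l
    simp at this hsum
    rw [hsum, one_mul] at this
    have h2 : β l = 2 * a 0 l := by exact_mod_cast this
    omega
  · obtain ⟨p, hp1, hp2⟩ := pt_exists _ _ (hdeg le_rfl 0)
    obtain ⟨q, hq1, hq2⟩ := pt_exists _ _ (hdeg le_rfl 1)
    have h := comb1 p q ⟨β 0, hβ le_rfl 0⟩ ⟨β 1, hβ le_rfl 1⟩
    rw [hp1, hp2, hq1, hq2] at h
    rw [Fin.sum_univ_two] at hX hY hsum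
    have l0 := hpos 0
    have l1 := hpos 1
    have hl : lam 0 = 1 - lam 1 := by linarith
    rw [hl] at hX hY l0
    have hD : 0 < ((a 1 0 : ℝ) - a 0 0) * (a 1 0 - a 0 0) + (a 1 1 - a 0 1) * (a 1 1 - a 0 1) := by
      by_contra hD
      have e0 : (a 1 0 : ℝ) - a 0 0 = 0 := by nlinarith [mul_self_nonneg ((a 1 0 : ℝ) - a 0 0), mul_self_nonneg ((a 1 1 : ℝ) - a 0 1)]
      have e1 : (a 1 1 : ℝ) - a 0 1 = 0 := by nlinarith [mul_self_nonneg ((a 1 0 : ℝ) - a 0 0), mul_self_nonneg ((a 1 1 : ℝ) - a 0 1)]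
      have := hai' ![1, -1] (by simp) (by
        intro i
        fin_cases i <;> simp [Fin.sum_univ_two] <;> linarith)
      have := congrFun this 0
      simp at this
    obtain ⟨k, i, j, hh1, hh2⟩ := h (by
        have : ((a 1 0 : ℝ) - a 0 0) * ((β 1 : ℝ) - 2 * a 0 1) = (a 1 1 - a 0 1) * (β 0 - 2 * a 0 0) := by
          rw [hX, hY]; ring
        exact_mod_cast this) (by
        have : 0 < ((a 1 0 : ℝ) - a 0 0) * ((β 0 : ℝ) - 2 * a 0 0) + (a 1 1 - a 0 1) * (β 1 - 2 * a 0 1) := by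
          rw [hX, hY]
          have := mul_pos l1 hD
          linarith
        exact_mod_cast this) (by
        have : ((a 1 0 : ℝ) - a 0 0) * ((β 0 : ℝ) - 2 * a 0 0) + (a 1 1 - a 0 1) * (β 1 - 2 * a 0 1) <
           2 * (((a 1 0 : ℝ) - a 0 0) * (a 1 0 - a 0 0) + (a 1 1 - a 0 1) * (a 1 1 - a 0 1)) := by
          rw [hX, hY]
          have := mul_pos l0 hD
          linarith
        exact_mod_cast this)
    have ex : ∀ i, ![((a 0 0 : ℕ) : ℤ), ((a 1 0 : ℕ) : ℤ)] i = ((a i 0 : ℕ) : ℤ) := by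
      intro i; fin_cases i <;> rfl
    have ey : ∀ i, ![((a 0 1 : ℕ) : ℤ), ((a 1 1 : ℕ) : ℤ)] i = ((a i 1 : ℕ) : ℤ) := by
      intro i; fin_cases i <;> rfl
    rw [ex, ex, ex] at hh1
    rw [ey, ey, ey] at hh2
    refine ⟨k, i, j, fun l => ?_⟩
    fin_cases l
    · exact_mod_cast hh1
    · exact_mod_cast hh2
  · have h12 : 1 ≤ 2 := by norm_num
    obtain ⟨p, hp1, hp2⟩ := pt_exists _ _ (hdeg h12 0)
    obtain ⟨q, hq1, hq2⟩ := pt_exists _ _ (hdeg h12 1)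
    obtain ⟨w, hw1, hw2⟩ := pt_exists _ _ (hdeg h12 2)
    have h := comb2 p q w
    rw [hp1, hp2, hq1, hq2, hw1, hw2] at h
    have l0 := hpos 0
    have l1 := hpos 1
    have l2 := hpos 2
    rw [Fin.sum_univ_three] at hX hY hsum
    have hD : ((a 1 0 : ℝ) - a 0 0) * (a 2 1 - a 0 1) - (a 2 0 - a 0 0) * (a 1 1 - a 0 1) ≠ 0 := by
      intro hD
      have hx := hai' ![(a 2 0 : ℝ) - a 1 0, a 0 0 - a 2 0, a 1 0 - a 0 0]
        (by simp [Fin.sum_univ_three]) (by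
        intro i
        fin_cases i <;> simp [Fin.sum_univ_three] <;> linarith)
      have hy := hai' ![(a 2 1 : ℝ) - a 1 1, a 0 1 - a 2 1, a 1 1 - a 0 1]
        (by simp [Fin.sum_univ_three]) (by
        intro i
        fin_cases i <;> simp [Fin.sum_univ_three] <;> linarith)
      have hx2 := congrFun hx 2
      have hy2 := congrFun hy 2
      simp at hx2 hy2
      have := hai' ![1, -1, 0] (by simp [Fin.sum_univ_three]) (by
        intro i
        fin_cases i <;> simp [Fin.sum_univ_three] <;> linarith)
      have := congrFun this 0
      simp at this
    set D : ℝ := ((a 1 0 : ℝ) - a 0 0) * (a 2 1 - a 0 1) - (a 2 0 - a 0 0) * (a 1 1 - a 0 1) with hDd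
    have hD2 : 0 < D * D := mul_self_pos.2 hD
    have hl : lam 0 = 1 - lam 1 - lam 2 := by linarith
    obtain ⟨k, i, j, hh1, hh2⟩ := h (by rw [hDd] at hD; exact_mod_cast hD)
      ⟨β 0, hβ h12 0⟩ ⟨β 1, hβ h12 1⟩ (by
        have : 0 < D * ((2 * (a 1 0 : ℝ) - β 0) * (2 * a 2 1 - β 1)
            - (2 * a 2 0 - β 0) * (2 * a 1 1 - β 1)) := by
          have e : D * ((2 * (a 1 0 : ℝ) - β 0) * (2 * a 2 1 - β 1)
            - (2 * a 2 0 - β 0) * (2 * a 1 1 - β 1)) = 4 * (lam 0 * (D * D)) := by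
            rw [hX, hY, hl, hDd]; ring
          rw [e]
          positivity
        rw [hDd] at this
        exact_mod_cast this) (by
        have : 0 < D * ((2 * (a 2 0 : ℝ) - β 0) * (2 * a 0 1 - β 1)
            - (2 * a 0 0 - β 0) * (2 * a 2 1 - β 1)) := by
          have e : D * ((2 * (a 2 0 : ℝ) - β 0) * (2 * a 0 1 - β 1)
            - (2 * a 0 0 - β 0) * (2 * a 2 1 - β 1)) = 4 * (lam 1 * (D * D)) := by
            rw [hX, hY, hl, hDd]; ring
          rw [e]
          positivity
        rw [hDd] at this
        exact_mod_cast this) (by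
        have : 0 < D * ((2 * (a 0 0 : ℝ) - β 0) * (2 * a 1 1 - β 1)
            - (2 * a 1 0 - β 0) * (2 * a 0 1 - β 1)) := by
          have e : D * ((2 * (a 0 0 : ℝ) - β 0) * (2 * a 1 1 - β 1)
            - (2 * a 1 0 - β 0) * (2 * a 0 1 - β 1)) = 4 * (lam 2 * (D * D)) := by
            rw [hX, hY, hl, hDd]; ring
          rw [e]
          positivity
        rw [hDd] at this
        exact_mod_cast this)
    have ex : ∀ i, ![((a 0 0 : ℕ) : ℤ), ((a 1 0 : ℕ) : ℤ), ((a 2 0 : ℕ) : ℤ)] i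
        = ((a i 0 : ℕ) : ℤ) := by
      intro i; fin_cases i <;> rfl
    have ey : ∀ i, ![((a 0 1 : ℕ) : ℤ), ((a 1 1 : ℕ) : ℤ), ((a 2 1 : ℕ) : ℤ)] i
        = ((a i 1 : ℕ) : ℤ) := by
      intro i; fin_cases i <;> rfl
    rw [ex, ex, ex] at hh1
    rw [ey, ey, ey] at hh2
    refine ⟨k, i, j, fun l => ?_⟩
    fin_cases l
    · exact_mod_cast hh1
    · exact_mod_cast hh2

theorem coeff_ne {n r : ℕ} (hr : 1 ≤ r)
    (α : Fin (r + 1) → (Fin n →₀ ℕ)) (β : Fin n →₀ ℕ)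
    (b : Fin (r + 1) → ℝ) (c : ℝ) (lam : Fin (r + 1) → ℝ)
    (hb : ∀ j, 0 < b j) (hpos : ∀ j, 0 < lam j)
    (hsum : ∑ j, lam j = 1) (hbar : ∀ i, (β i : ℝ) = ∑ j, lam j * (α j i : ℝ))
    (hai : AI α) (j : Fin (r + 1)) :
    coeff (α j) ((∑ j, monomial (α j) (b j)) + monomial β c) ≠ 0 := by
  have hinj : ∀ i, α i = α j → i = j := by
    intro i hij
    by_contra hne
    have := ai_eq hai (Pi.single i 1) (Pi.single j 1) (by simp) (by
      intro l; simp [Pi.single_apply, hij])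
    have := congrFun this i
    simp [Pi.single_apply, hne] at this
  have hβ : β ≠ α j := by
    intro h
    have h1 := ai_eq hai lam (Pi.single j 1) (by simp [hsum]) (by
      intro l; rw [← hbar]; simp [Pi.single_apply, h])
    have : ∃ i : Fin (r + 1), i ≠ j := by
      have : Nontrivial (Fin (r + 1)) := Fin.nontrivial_iff_two_le.2 (by omega)
      exact exists_ne j
    obtain ⟨i, hi⟩ := this
    have h2 := congrFun h1 i
    simp [Pi.single_apply, hi] at h2
    exact (hpos i).ne' h2
  rw [coeff_add, coeff_sum, Finset.sum_eq_single j]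
  · simp [coeff_monomial, hβ, (hb j).ne']
  · intro i _ hi
    rw [coeff_monomial, if_neg (fun h => hi (hinj i h))]
  · simp

theorem circuit_sos (p q : MvPolynomial (Fin 2) ℝ) (hp : p.totalDegree ≤ 4)
    (hq : ∀ x, 0 ≤ eval x q) (hqp : ∀ x, eval x q ≤ eval x p) (hc : IsCircuitPoly q) :
    IsSumSq q := by
  obtain ⟨r, hr, α, β, b, c, lam, hb, hev, hpos, hsum, hbar, hu, hqe⟩ := hc
  have hai := ai_of_unique α β lam hpos hsum hbar hu
  have hex : ∃ a : Fin (r + 1) → (Fin 2 →₀ ℕ), ∀ j, α j = a j + a j := by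
    choose e he using hev
    exact ⟨fun j => Finsupp.equivFunOnFinite.symm (e j), fun j => by ext i; simp [he]⟩
  obtain ⟨a, ha⟩ := hex
  refine core q hq α β b c lam hb hev hpos hsum hbar hai hqe a ha ?_
  refine comb hr α β lam hpos hsum hbar hai a ha ?_
  intro h1 j
  have h2 := coeff_ne h1 α β b c lam hb hpos hsum hbar hai j
  rw [← hqe] at h2
  have h3 := degree_bound p q hp hq hqp _ h2
  rw [Finsupp.degree_eq_sum, Fin.sum_univ_two, ha] at h3
  simp at h3
  omega

theorem sumSq_exists {R : Type*} [CommSemiring R] {p : R} (h : IsSumSq p) :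
    ∃ (k : ℕ) (s : Fin k → R), p = ∑ m, s m ^ 2 := by
  induction h with
  | zero => exact ⟨0, Fin.elim0, by simp⟩
  | sq_add a _ ih =>
    obtain ⟨k, s, hs⟩ := ih
    exact ⟨k + 1, Fin.cons a s, by rw [Fin.sum_univ_succ]; simp [hs, sq]⟩

end SoncAux

/-- `C_{2,4} ⊆ Σ_{2,4}`: every bivariate polynomial of degree
at most `4` that is a sum of nonnegative circuit polynomials is a sum of
squares of polynomials. -/
theorem SONCCone_subset_SOSCone_two_four :
    SONCCone 2 2 ⊆ SOSCone 2 2 := by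
  rintro p ⟨hdeg, k, q, hq, hp⟩
  refine ⟨hdeg, SoncAux.sumSq_exists ?_⟩
  have : IsSumSq (∑ m, q m) := by
    apply IsSumSq.sum
    intro m _
    refine SoncAux.circuit_sos p (q m) hdeg (hq m).2 ?_ (hq m).1
    intro x
    rw [hp, map_sum]
    exact Finset.single_le_sum (f := fun m => eval x (q m)) (fun i _ => (hq i).2 x)
      (Finset.mem_univ m)
  rw [hp]
  exact this
end

section
/- If n ≥ 2, 2d ≥ 4 and (n,2d) ≠ (2,4), then C_{n,2d} ⊄ Σ_{n,2d}: there exists an n-variate polynomial of degree at most 2d that is a sum of nonnegative circuit polynomials but is not a sum of squares of polynomials. -/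
open MvPolynomial

theorem top_aux {σ : Type*} (m : MonomialOrder σ) (p : MvPolynomial σ ℝ) (k : ℕ)
    (s : Fin k → MvPolynomial σ ℝ) (hp : p = ∑ i, s i ^ 2) (e : σ →₀ ℕ)
    (he : ∀ d, m.toSyn e < m.toSyn d → coeff (d + d) p = 0) (i : Fin k) (d : σ →₀ ℕ)
    (hd : m.toSyn e < m.toSyn d) : coeff d (s i) = 0 := by
  obtain ⟨i0, -, hi0⟩ := Finset.exists_max_image Finset.univ
    (fun j => m.toSyn (m.degree (s j))) ⟨i, Finset.mem_univ i⟩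
  by_contra hne
  have h1 : m.toSyn d ≤ m.toSyn (m.degree (s i)) := by
    by_contra hlt
    exact hne (m.coeff_eq_zero_of_lt (not_le.mp hlt))
  set D := m.degree (s i0) with hD
  have h2 : m.toSyn d ≤ m.toSyn D := h1.trans (hi0 i (Finset.mem_univ i))
  have h3 := he D (hd.trans_le h2)
  rw [hp, coeff_sum] at h3
  have h4 : ∀ j, coeff (D + D) (s j ^ 2) = coeff D (s j) ^ 2 := by
    intro j
    rw [pow_two, m.coeff_mul_of_add_of_degree_le (hi0 j (Finset.mem_univ j))
      (hi0 j (Finset.mem_univ j)), pow_two]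
  simp only [h4] at h3
  rw [Finset.sum_eq_zero_iff_of_nonneg (fun j _ => sq_nonneg _)] at h3
  have h5 : coeff D (s i0) = 0 := by simpa using h3 i0 (Finset.mem_univ _)
  have h6 : s i0 = 0 := m.leadingCoeff_eq_zero_iff.mp h5
  have h7 : D = 0 := by rw [hD, h6, m.degree_zero]
  rw [h7, map_zero] at h2
  have h8 := hd.trans_le h2
  exact absurd h8 (not_lt.mpr (by simpa using m.bot_eq_zero ▸ bot_le))

theorem vertex_aux {σ : Type*} (p : MvPolynomial σ ℝ) (k : ℕ)
    (s : Fin k → MvPolynomial σ ℝ) (hp : p = ∑ i, s i ^ 2) (a : σ →₀ ℕ)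
    (h0 : coeff (a + a) p = 0)
    (h : ∀ i b c, b + c = a + a → b ≠ a → coeff b (s i) * coeff c (s i) = 0) (i : Fin k) :
    coeff a (s i) = 0 := by
  classical
  have h4 : ∀ j, coeff (a + a) (s j ^ 2) = coeff a (s j) ^ 2 := by
    intro j
    rw [pow_two, coeff_mul, Finset.sum_eq_single (a, a), pow_two]
    · rintro ⟨b, c⟩ hbc hne
      rw [Finset.HasAntidiagonal.mem_antidiagonal] at hbc
      refine h j b c hbc ?_
      rintro rfl
      exact hne (by simpa using hbc)
    · intro hh
      simp at hh
  rw [hp, coeff_sum] at h0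
  simp only [h4] at h0
  rw [Finset.sum_eq_zero_iff_of_nonneg (fun j _ => sq_nonneg _)] at h0
  simpa using h0 i (Finset.mem_univ _)

theorem IsCircuitPoly.rename_inj {k n : ℕ} (f : Fin k → Fin n) (hf : Function.Injective f)
    {p : MvPolynomial (Fin k) ℝ} (hp : IsCircuitPoly p) : IsCircuitPoly (rename f p) := by
  obtain ⟨r, hr, α, β, b, c, lam, hb, hα, hlam, hsum, hβ, huniq, rfl⟩ := hp
  have hkn : k ≤ n := by simpa using Fintype.card_le_of_injective f hf
  refine ⟨r, hr.trans hkn, fun j => (α j).mapDomain f, β.mapDomain f, b, c, lam, hb, ?_, hlam,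
    hsum, ?_, ?_, ?_⟩
  · intro j i
    by_cases hi : i ∈ Set.range f
    · obtain ⟨i, rfl⟩ := hi
      rw [Finsupp.mapDomain_apply hf]
      exact hα j i
    · rw [Finsupp.mapDomain_notin_range _ _ hi]
      exact Even.zero
  · intro i
    by_cases hi : i ∈ Set.range f
    · obtain ⟨i, rfl⟩ := hi
      simp only [Finsupp.mapDomain_apply hf]
      exact hβ i
    · simp only [Finsupp.mapDomain_notin_range _ _ hi]
      simp
  · intro mu h1 h2 h3
    refine huniq mu h1 h2 fun i => ?_
    simpa only [Finsupp.mapDomain_apply hf] using h3 (f i)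
  · simp [rename_monomial]

theorem lift_aux {k n d : ℕ} (hkn : k ≤ n) (p : MvPolynomial (Fin k) ℝ)
    (hdeg : p.totalDegree ≤ 2 * d) (hc : IsCircuitPoly p) (hpos : ∀ x, 0 ≤ eval x p)
    (hns : ∀ (m : ℕ) (s : Fin m → MvPolynomial (Fin k) ℝ), p ≠ ∑ i, s i ^ 2) :
    ∃ p : MvPolynomial (Fin n) ℝ, p ∈ SONCCone n d ∧ p ∉ SOSCone n d := by
  have hf := Fin.castLE_injective hkn
  refine ⟨rename (Fin.castLE hkn) p, ⟨(totalDegree_rename_le _ _).trans hdeg, 1,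
    fun _ => rename (Fin.castLE hkn) p, fun _ => ⟨hc.rename_inj _ hf, fun x => ?_⟩, by simp⟩, ?_⟩
  · rw [eval_rename]
    exact hpos _
  · rintro ⟨-, m, s, hs⟩
    apply hns m (fun i => killCompl hf (s i))
    have := congrArg (killCompl hf) hs
    rw [killCompl_rename_app] at this
    rw [this]
    simp

/-- exponents in three variables -/
noncomputable def e3 (a b c : ℕ) : Fin 3 →₀ ℕ := Finsupp.equivFunOnFinite.symm ![a, b, c]

theorem e3_0 (a b c : ℕ) : e3 a b c 0 = a := rfl
theorem e3_1 (a b c : ℕ) : e3 a b c 1 = b := rfl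
theorem e3_2 (a b c : ℕ) : e3 a b c 2 = c := rfl

theorem e3_eta (d : Fin 3 →₀ ℕ) : e3 (d 0) (d 1) (d 2) = d := by
  ext i; fin_cases i <;> rfl

theorem e3_inj (a b c a' b' c' : ℕ) : e3 a b c = e3 a' b' c' ↔ a = a' ∧ b = b' ∧ c = c' := by
  constructor
  · intro h
    exact ⟨DFunLike.congr_fun h 0, DFunLike.congr_fun h 1, DFunLike.congr_fun h 2⟩
  · rintro ⟨rfl, rfl, rfl⟩; rfl

theorem e3_add (a b c a' b' c' : ℕ) : e3 a b c + e3 a' b' c' = e3 (a + a') (b + b') (c + c') := by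
  ext i; fin_cases i <;> rfl

theorem e3_lt (a b c a' b' c' : ℕ) :
    MonomialOrder.lex.toSyn (e3 a b c) < MonomialOrder.lex.toSyn (e3 a' b' c') ↔
      a < a' ∨ a = a' ∧ (b < b' ∨ b = b' ∧ c < c') := by
  rw [MonomialOrder.lex_lt_iff, Finsupp.Lex.lt_iff]
  simp only [Fin.exists_fin_succ, Fin.forall_fin_succ]
  simp [e3]
  omega

/-- exponents in two variables -/
noncomputable def e2 (a b : ℕ) : Fin 2 →₀ ℕ := Finsupp.equivFunOnFinite.symm ![a, b]

theorem e2_eta (d : Fin 2 →₀ ℕ) : e2 (d 0) (d 1) = d := by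
  ext i; fin_cases i <;> rfl

theorem e2_inj (a b a' b' : ℕ) : e2 a b = e2 a' b' ↔ a = a' ∧ b = b' := by
  constructor
  · intro h
    exact ⟨DFunLike.congr_fun h 0, DFunLike.congr_fun h 1⟩
  · rintro ⟨rfl, rfl⟩; rfl

theorem e2_add (a b a' b' : ℕ) : e2 a b + e2 a' b' = e2 (a + a') (b + b') := by
  ext i; fin_cases i <;> rfl

theorem e2_lt (a b a' b' : ℕ) :
    MonomialOrder.lex.toSyn (e2 a b) < MonomialOrder.lex.toSyn (e2 a' b') ↔
      a < a' ∨ a = a' ∧ b < b' := by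
  rw [MonomialOrder.lex_lt_iff, Finsupp.Lex.lt_iff]
  simp only [Fin.exists_fin_succ, Fin.forall_fin_succ]
  simp [e2]

/-- Choi-Lam -/
noncomputable def P3 : MvPolynomial (Fin 3) ℝ :=
  (monomial (e3 0 0 0) 1 + monomial (e3 2 2 0) 1 + monomial (e3 2 0 2) 1 + monomial (e3 0 2 2) 1)
    + monomial (e3 1 1 1) (-4)

/-- Motzkin -/
noncomputable def P2 : MvPolynomial (Fin 2) ℝ :=
  (monomial (e2 0 0) 1 + monomial (e2 4 2) 1 + monomial (e2 2 4) 1) + monomial (e2 2 2) (-3)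

theorem P3_circuit : IsCircuitPoly P3 := by
  refine ⟨3, le_rfl, ![e3 0 0 0, e3 2 2 0, e3 2 0 2, e3 0 2 2], e3 1 1 1, fun _ => 1, -4,
    fun _ => 1 / 4, by simp, ?_, by simp, by simp, ?_, ?_, ?_⟩
  · intro j i
    fin_cases j <;> fin_cases i <;> simp [e3]
  · intro i
    fin_cases i <;> simp [e3, Fin.sum_univ_four] <;> norm_num
  · intro mu _ h1 h2
    have a := h2 0
    have b := h2 1
    have c := h2 2
    simp [e3, Fin.sum_univ_four] at a b c h1
    ext j
    fin_cases j <;> simp <;> linarith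
  · simp [P3, Fin.sum_univ_four]

theorem P2_circuit : IsCircuitPoly P2 := by
  refine ⟨2, le_rfl, ![e2 0 0, e2 4 2, e2 2 4], e2 2 2, fun _ => 1, -3,
    fun _ => 1 / 3, by simp, ?_, by simp, by simp, ?_, ?_, ?_⟩
  · intro j i
    fin_cases j <;> fin_cases i <;> simp [e2] <;> decide
  · intro i
    fin_cases i <;> simp [e2, Fin.sum_univ_three] <;> norm_num
  · intro mu _ h1 h2
    have a := h2 0
    have b := h2 1
    simp [e2, Fin.sum_univ_three] at a b h1
    ext j
    fin_cases j <;> simp <;> linarith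
  · simp [P2, Fin.sum_univ_three]

theorem P3_nonneg (x : Fin 3 → ℝ) : 0 ≤ eval x P3 := by
  simp [P3, eval_monomial, Finsupp.prod_fintype, Fin.prod_univ_three, e3]
  generalize x 0 = a
  generalize x 1 = b
  generalize x 2 = c
  have h1 := sq_nonneg (a * b - a * c)
  have h2 := sq_nonneg (b * c - 1)
  have h3 := sq_nonneg (a * b + a * c)
  have h4 := sq_nonneg (b * c + 1)
  rcases le_total 0 (b * c) with h | h
  · nlinarith [mul_nonneg h (sq_nonneg (a - 1))]
  · nlinarith [mul_nonneg (neg_nonneg.mpr h) (sq_nonneg (a + 1))]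

theorem P2_nonneg (x : Fin 2 → ℝ) : 0 ≤ eval x P2 := by
  simp [P2, eval_monomial, Finsupp.prod_fintype, Fin.prod_univ_two, e2]
  generalize x 0 = a
  generalize x 1 = b
  -- with u = a², v = b²: 1 + u v (u + v - 3) ≥ 0
  have h1 : 0 ≤ a ^ 2 * b ^ 2 * (a ^ 2 + b ^ 2 - 2 * (a * b)) := by
    have := mul_nonneg (sq_nonneg (a * b)) (sq_nonneg (a - b)); nlinarith
  have h2 : 0 ≤ a ^ 2 * b ^ 2 * (a ^ 2 + b ^ 2 + 2 * (a * b)) := by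
    have := mul_nonneg (sq_nonneg (a * b)) (sq_nonneg (a + b)); nlinarith
  have key : ∀ t : ℝ, 0 ≤ t → 0 ≤ 1 + 2 * t ^ 3 - 3 * t ^ 2 := by
    intro t ht
    nlinarith [mul_nonneg (sq_nonneg (t - 1)) (by linarith : 0 ≤ 2 * t + 1)]
  rcases le_total 0 (a * b) with h | h
  · have := key _ h; nlinarith
  · have := key _ (neg_nonneg.mpr h); nlinarith

theorem P3_deg : P3.totalDegree ≤ 4 := by
  unfold P3
  refine (totalDegree_add _ _).trans (max_le ((totalDegree_add _ _).trans (max_le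
    ((totalDegree_add _ _).trans (max_le ((totalDegree_add _ _).trans (max_le ?_ ?_)) ?_)) ?_)) ?_)
  all_goals
    refine (totalDegree_monomial_le _ _).trans ?_
    simp [Finsupp.sum_fintype, Fin.sum_univ_three, e3]

theorem P2_deg : P2.totalDegree ≤ 6 := by
  unfold P2
  refine (totalDegree_add _ _).trans (max_le ((totalDegree_add _ _).trans (max_le
    ((totalDegree_add _ _).trans (max_le ?_ ?_)) ?_)) ?_)
  all_goals
    refine (totalDegree_monomial_le _ _).trans ?_
    simp [Finsupp.sum_fintype, Fin.sum_univ_two, e2]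

theorem P3_half (k : ℕ) (s : Fin k → MvPolynomial (Fin 3) ℝ) (h : P3 = ∑ i, s i ^ 2) (i : Fin k) :
    coeff (e3 1 1 1) (s i) = 0 ∧ coeff (e3 1 0 0) (s i) = 0 := by
  have top : ∀ i a b c, (1 < a ∨ 1 = a ∧ (1 < b ∨ 1 = b ∧ 0 < c)) →
      coeff (e3 a b c) (s i) = 0 := by
    intro i a b c habc
    refine top_aux MonomialOrder.lex P3 k s h (e3 1 1 0) ?_ i _ ((e3_lt _ _ _ _ _ _).mpr habc)
    intro d hd
    rw [← e3_eta d] at hd ⊢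
    rw [e3_lt] at hd
    simp only [P3, coeff_add, coeff_monomial, e3_add, e3_inj]
    repeat rw [if_neg (by omega)]
    simp
  refine ⟨top i _ _ _ (by omega), vertex_aux P3 k s h _ ?_ ?_ i⟩
  · simp [P3, coeff_add, coeff_monomial, e3_add, e3_inj]
  · intro j b c hbc hne
    rw [← e3_eta b, ← e3_eta c] at *
    simp only [e3_0, e3_1, e3_2, ne_eq, e3_add, e3_inj] at hbc hne
    rcases (by omega : 1 < b 0 ∨ 1 < c 0) with h' | h'
    · rw [top j _ _ _ (Or.inl h'), zero_mul]
    · rw [top j _ _ _ (Or.inl h'), mul_zero]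

theorem e3_swap01 (a b c : ℕ) :
    (e3 a b c).mapDomain (Equiv.swap (0 : Fin 3) 1) = e3 b a c := by
  ext i
  rw [Finsupp.mapDomain_equiv_apply]
  fin_cases i <;> rfl

theorem e3_swap02 (a b c : ℕ) :
    (e3 a b c).mapDomain (Equiv.swap (0 : Fin 3) 2) = e3 c b a := by
  ext i
  rw [Finsupp.mapDomain_equiv_apply]
  fin_cases i <;> rfl

theorem e2_swap (a b : ℕ) :
    (e2 a b).mapDomain (Equiv.swap (0 : Fin 2) 1) = e2 b a := by
  ext i
  rw [Finsupp.mapDomain_equiv_apply]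
  fin_cases i <;> rfl

theorem P3_not (k : ℕ) (s : Fin k → MvPolynomial (Fin 3) ℝ) : P3 ≠ ∑ i, s i ^ 2 := by
  intro h
  have hx : ∀ i, coeff (e3 1 0 0) (s i) = 0 := fun i => (P3_half k s h i).2
  have ht : ∀ i, coeff (e3 1 1 1) (s i) = 0 := fun i => (P3_half k s h i).1
  have hy : ∀ i, coeff (e3 0 1 0) (s i) = 0 := by
    intro i
    have := (P3_half k (fun i => rename (Equiv.swap (0 : Fin 3) 1) (s i)) (by
      have h' := congrArg (rename (Equiv.swap (0 : Fin 3) 1)) h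
      simp only [map_sum, map_pow] at h'
      rw [← h']
      simp only [P3, map_add, rename_monomial, e3_swap01]
      abel) i).2
    rwa [← e3_swap01, coeff_rename_mapDomain _ (Equiv.injective _)] at this
  have hz : ∀ i, coeff (e3 0 0 1) (s i) = 0 := by
    intro i
    have := (P3_half k (fun i => rename (Equiv.swap (0 : Fin 3) 2) (s i)) (by
      have h' := congrArg (rename (Equiv.swap (0 : Fin 3) 2)) h
      simp only [map_sum, map_pow] at h'
      rw [← h']
      simp only [P3, map_add, rename_monomial, e3_swap02]
      abel) i).2
    rwa [← e3_swap02, coeff_rename_mapDomain _ (Equiv.injective _)] at this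
  have h1 := congrArg (coeff (e3 1 1 1)) h
  rw [coeff_sum, Finset.sum_eq_zero] at h1
  · simp [P3, coeff_add, coeff_monomial, e3_inj] at h1
  · intro i _
    rw [pow_two, coeff_mul]
    refine Finset.sum_eq_zero ?_
    rintro ⟨b, c⟩ hbc
    rw [Finset.HasAntidiagonal.mem_antidiagonal, ← e3_eta b, ← e3_eta c, e3_add, e3_inj] at hbc
    simp only
    rw [← e3_eta b, ← e3_eta c]
    generalize b 0 = b0, b 1 = b1, b 2 = b2, c 0 = c0, c 1 = c1, c 2 = c2 at *
    obtain ⟨h0, h1, h2⟩ := hbc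
    rcases (by omega : b0 = 0 ∧ c0 = 1 ∨ b0 = 1 ∧ c0 = 0) with ⟨rfl, rfl⟩ | ⟨rfl, rfl⟩ <;>
    rcases (by omega : b1 = 0 ∧ c1 = 1 ∨ b1 = 1 ∧ c1 = 0) with ⟨rfl, rfl⟩ | ⟨rfl, rfl⟩ <;>
    rcases (by omega : b2 = 0 ∧ c2 = 1 ∨ b2 = 1 ∧ c2 = 0) with ⟨rfl, rfl⟩ | ⟨rfl, rfl⟩ <;>
    simp [hx, hy, hz, ht]

theorem P2_half (k : ℕ) (s : Fin k → MvPolynomial (Fin 2) ℝ) (h : P2 = ∑ i, s i ^ 2) (i : Fin k) :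
    coeff (e2 2 2) (s i) = 0 ∧ coeff (e2 2 0) (s i) = 0 ∧ coeff (e2 1 0) (s i) = 0 := by
  have top : ∀ i a b, (2 < a ∨ 2 = a ∧ 1 < b) → coeff (e2 a b) (s i) = 0 := by
    intro i a b hab
    refine top_aux MonomialOrder.lex P2 k s h (e2 2 1) ?_ i _ ((e2_lt _ _ _ _).mpr hab)
    intro d hd
    rw [← e2_eta d] at hd ⊢
    rw [e2_lt] at hd
    simp only [P2, coeff_add, coeff_monomial, e2_add, e2_inj]
    repeat rw [if_neg (by omega)]
    simp
  have h20 : ∀ i, coeff (e2 2 0) (s i) = 0 := by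
    refine vertex_aux P2 k s h _ ?_ ?_
    · simp [P2, coeff_add, coeff_monomial, e2_add, e2_inj]
    · intro j b c hbc hne
      rw [← e2_eta b, ← e2_eta c, e2_add, e2_add, e2_inj] at hbc
      rw [← e2_eta b, ne_eq, e2_inj] at hne
      rw [← e2_eta b, ← e2_eta c]
      rcases (by omega : 2 < b 0 ∨ 2 < c 0) with h' | h'
      · rw [top j _ _ (Or.inl h'), zero_mul]
      · rw [top j _ _ (Or.inl h'), mul_zero]
  refine ⟨top i _ _ (by omega), h20 i, vertex_aux P2 k s h _ ?_ ?_ i⟩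
  · simp [P2, coeff_add, coeff_monomial, e2_add, e2_inj]
  · intro j b c hbc hne
    rw [← e2_eta b, ← e2_eta c, e2_add, e2_add, e2_inj] at hbc
    rw [← e2_eta b, ne_eq, e2_inj] at hne
    rw [← e2_eta b, ← e2_eta c]
    rcases (by omega : b 0 = 2 ∧ b 1 = 0 ∨ c 0 = 2 ∧ c 1 = 0) with ⟨h1, h2⟩ | ⟨h1, h2⟩
    · rw [h1, h2, h20, zero_mul]
    · rw [h1, h2, h20, mul_zero]

theorem P2_not (k : ℕ) (s : Fin k → MvPolynomial (Fin 2) ℝ) : P2 ≠ ∑ i, s i ^ 2 := by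
  intro h
  have hx : ∀ i, coeff (e2 1 0) (s i) = 0 := fun i => (P2_half k s h i).2.2
  have hxx : ∀ i, coeff (e2 2 0) (s i) = 0 := fun i => (P2_half k s h i).2.1
  have ht : ∀ i, coeff (e2 2 2) (s i) = 0 := fun i => (P2_half k s h i).1
  have hy : ∀ i, coeff (e2 0 1) (s i) = 0 := by
    intro i
    have := (P2_half k (fun i => rename (Equiv.swap (0 : Fin 2) 1) (s i)) (by
      have h' := congrArg (rename (Equiv.swap (0 : Fin 2) 1)) h
      simp only [map_sum, map_pow] at h'
      rw [← h']
      simp only [P2, map_add, rename_monomial, e2_swap]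
      abel) i).2.2
    rwa [← e2_swap, coeff_rename_mapDomain _ (Equiv.injective _)] at this
  have h1 := congrArg (coeff (e2 2 2)) h
  have h2 : 0 ≤ coeff (e2 2 2) (∑ i, s i ^ 2) := by
    rw [coeff_sum]
    refine Finset.sum_nonneg fun i _ => ?_
    rw [pow_two, coeff_mul]
    refine Finset.sum_nonneg ?_
    rintro ⟨b, c⟩ hbc
    rw [Finset.HasAntidiagonal.mem_antidiagonal, ← e2_eta b, ← e2_eta c, e2_add, e2_inj] at hbc
    simp only
    rw [← e2_eta b, ← e2_eta c]
    generalize b 0 = b0, b 1 = b1, c 0 = c0, c 1 = c1 at *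
    obtain ⟨h0, h1⟩ := hbc
    rcases (by omega : b0 = 0 ∧ c0 = 2 ∨ b0 = 1 ∧ c0 = 1 ∨ b0 = 2 ∧ c0 = 0) with
      ⟨rfl, rfl⟩ | ⟨rfl, rfl⟩ | ⟨rfl, rfl⟩ <;>
    rcases (by omega : b1 = 0 ∧ c1 = 2 ∨ b1 = 1 ∧ c1 = 1 ∨ b1 = 2 ∧ c1 = 0) with
      ⟨rfl, rfl⟩ | ⟨rfl, rfl⟩ | ⟨rfl, rfl⟩ <;>
    simp [hx, hy, hxx, ht, mul_self_nonneg]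
  rw [← h] at h2
  simp [P2, coeff_add, coeff_monomial, e2_inj] at h2
  norm_num at h2

/-- If `n ≥ 2`, `2d ≥ 4` and `(n,2d) ≠ (2,4)`, then
`C_{n,2d} ⊄ Σ_{n,2d}`: there is an `n`-variate polynomial of degree at most
`2d` that is a sum of nonnegative circuit polynomials but not a sum of squares
of polynomials. -/
theorem SONCCone_not_subset_SOSCone (n d : ℕ)
    (hn : 2 ≤ n) (hd : 4 ≤ 2 * d) (hne : (n, 2 * d) ≠ (2, 4)) :
    ∃ p : MvPolynomial (Fin n) ℝ, p ∈ SONCCone n d ∧ p ∉ SOSCone n d := by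
  by_cases h3 : 3 ≤ n
  · exact lift_aux h3 P3 (P3_deg.trans hd) P3_circuit P3_nonneg P3_not
  · have h2 : n = 2 := by omega
    subst h2
    have hd3 : 6 ≤ 2 * d := by
      by_contra hlt
      apply hne
      rw [Prod.mk.injEq]
      omega
    exact lift_aux le_rfl P2 (P2_deg.trans hd3) P2_circuit P2_nonneg P2_not
end

section
/- Let p(x) = Σ_{i=0}^{h−1} b_i x^{α(i)} + Σ_{j=0}^{t−h−1} b_{h+j} x^{β(j)} be a polynomial in n real variables where α(0) = 0, each α(i) ∈ (2ℕ)^n, b_i > 0 for 0 ≤ i ≤ h−1, and for each j there are λ_{i,j} > 0 with Σ_{i=0}^{h−1} λ_{i,j} = 1 and β(j) = Σ_{i=0}^{h−1} λ_{i,j} α(i). Suppose X = (X_{i,j}) with X_{i,j} > 0 satisfies Σ_{j=0}^{t−h−1} X_{i,j} ≤ b_i for all 1 ≤ i ≤ h−1 and Π_{i=0}^{h−1} (X_{i,j}/λ_{i,j})^{λ_{i,j}} ≥ |b_{h+j}| for all 0 ≤ j ≤ t−h−1. Then with γ = Σ_{j=0}^{t−h−1} X_{0,j} − b_0, the polynomial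 p + γ is a sum of nonnegative circuit polynomials (plus monomial squares); in particular p(x) ≥ b_0 − Σ_{j=0}^{t−h−1} X_{0,j} for all x ∈ ℝ^n. -/
open MvPolynomial

/-- `p` is a single monomial square `c·x^α` with `c > 0` and `α ∈ (2ℕ)^n`. -/
def IsMonomialSquare {n : ℕ} (p : MvPolynomial (Fin n) ℝ) : Prop :=
  ∃ (α : Fin n →₀ ℕ) (c : ℝ), 0 < c ∧ (∀ i, Even (α i)) ∧ p = monomial α c



def SoncGen (n : ℕ) : Set (MvPolynomial (Fin n) ℝ) :=
  {q | (IsCircuitPoly q ∧ ∀ x : Fin n → ℝ, 0 ≤ eval x q) ∨ IsMonomialSquare q}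

noncomputable def SoncCone (n : ℕ) : AddSubmonoid (MvPolynomial (Fin n) ℝ) :=
  AddSubmonoid.closure (SoncGen n)

lemma sonc_gen_smul {n : ℕ} {q : MvPolynomial (Fin n) ℝ} (hq : q ∈ SoncGen n) {θ : ℝ}
    (hθ : 0 < θ) : C θ * q ∈ SoncGen n := by
  rcases hq with ⟨⟨r, hr, α, β, b, c, lam, h1, h2, h3, h4, h5, h6, h7⟩, hx⟩ | ⟨α, c, hc, he, hp⟩
  · left
    refine ⟨⟨r, hr, α, β, fun j => θ * b j, θ * c, lam, fun j => mul_pos hθ (h1 j), h2, h3, h4,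
      h5, h6, ?_⟩, ?_⟩
    · rw [h7, mul_add, Finset.mul_sum]
      simp only [C_mul_monomial]
    · intro x
      rw [eval_mul, eval_C]
      exact mul_nonneg hθ.le (hx x)
  · right
    exact ⟨α, θ * c, mul_pos hθ hc, he, by rw [hp, C_mul_monomial]⟩

lemma sonc_cone_smul {n : ℕ} {q : MvPolynomial (Fin n) ℝ} (hq : q ∈ SoncCone n) {θ : ℝ}
    (hθ : 0 < θ) : C θ * q ∈ SoncCone n := by
  unfold SoncCone at hq ⊢
  induction hq using AddSubmonoid.closure_induction with
  | mem x hx => exact AddSubmonoid.subset_closure (sonc_gen_smul hx hθ)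
  | zero => rw [mul_zero]; exact zero_mem _
  | add x y _ _ hx hy => rw [mul_add]; exact add_mem hx hy

lemma mono_eval_nonneg {n : ℕ} (α : Fin n →₀ ℕ) (he : ∀ i, Even (α i)) (x : Fin n → ℝ) :
    0 ≤ ∏ k, x k ^ α k :=
  Finset.prod_nonneg fun k _ => (he k).pow_nonneg _

lemma eval_mono {n : ℕ} (α : Fin n →₀ ℕ) (c : ℝ) (x : Fin n → ℝ) :
    eval x (monomial α c) = c * ∏ k, x k ^ α k := by
  rw [eval_monomial, Finsupp.prod_fintype _ _ (by simp)]

lemma sonc_cone_nonneg {n : ℕ} {q : MvPolynomial (Fin n) ℝ} (hq : q ∈ SoncCone n)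
    (x : Fin n → ℝ) : 0 ≤ eval x q := by
  unfold SoncCone at hq
  induction hq using AddSubmonoid.closure_induction with
  | mem q hq =>
    rcases hq with ⟨_, h⟩ | ⟨α, c, hc, he, rfl⟩
    · exact h x
    · rw [eval_mono]
      exact mul_nonneg hc.le (mono_eval_nonneg α he x)
  | zero => simp
  | add p q _ _ hx hy => rw [map_add]; exact add_nonneg hx hy

lemma sonc_eval_nonneg {n h : ℕ} (α : Fin h → (Fin n →₀ ℕ)) (β : Fin n →₀ ℕ)
    (heven : ∀ i k, Even (α i k)) (y : Fin h → ℝ) (hy : ∀ i, 0 < y i)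
    (mu : Fin h → ℝ) (hmu : ∀ i, 0 ≤ mu i) (hs : ∑ i, mu i = 1)
    (hbar : ∀ k, (β k : ℝ) = ∑ i, mu i * (α i k : ℝ)) (c : ℝ)
    (hc : |c| ≤ ∏ i, y i ^ mu i) (x : Fin n → ℝ) :
    0 ≤ eval x ((∑ i, monomial (α i) (mu i * y i)) + monomial β c) := by
  have habs : ∀ i, ∏ k, x k ^ α i k = ∏ k, |x k| ^ α i k := fun i =>
    Finset.prod_congr rfl fun k _ => ((heven i k).pow_abs _).symm
  have key : ∏ k, |x k| ^ β k = ∏ i, (∏ k, x k ^ α i k) ^ mu i := by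
    simp only [habs]
    have : ∀ i, (∏ k, |x k| ^ α i k) ^ mu i = ∏ k, |x k| ^ (mu i * (α i k : ℝ)) := by
      intro i
      rw [← Real.finsetProd_rpow _ _ (fun k _ => by positivity)]
      refine Finset.prod_congr rfl fun k _ => ?_
      rw [mul_comm, Real.rpow_mul (abs_nonneg _), Real.rpow_natCast]
    simp only [this]
    rw [Finset.prod_comm]
    refine Finset.prod_congr rfl fun k _ => ?_
    rw [← Real.rpow_natCast, hbar k, Real.rpow_sum_of_nonneg (abs_nonneg _)]
    intro i _
    exact mul_nonneg (hmu i) (Nat.cast_nonneg _)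
  have hm : ∀ i, 0 ≤ ∏ k, x k ^ α i k := fun i => mono_eval_nonneg _ (heven i) x
  have amgm := Real.geom_mean_le_arith_mean_weighted Finset.univ mu
    (fun i => y i * ∏ k, x k ^ α i k) (fun i _ => hmu i) hs
    (fun i _ => mul_nonneg (hy i).le (hm i))
  have h2 : |c * ∏ k, x k ^ β k| ≤ ∏ i, (y i * ∏ k, x k ^ α i k) ^ mu i := by
    rw [abs_mul, Finset.abs_prod]
    simp only [abs_pow]
    rw [key]
    have : ∀ i, (y i * ∏ k, x k ^ α i k) ^ mu i = y i ^ mu i * (∏ k, x k ^ α i k) ^ mu i :=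
      fun i => Real.mul_rpow (hy i).le (hm i)
    simp only [this]
    rw [Finset.prod_mul_distrib]
    exact mul_le_mul_of_nonneg_right hc
      (Finset.prod_nonneg fun i _ => Real.rpow_nonneg (hm i) _)
  rw [map_add, map_sum]
  simp only [eval_mono]
  have h3 := neg_abs_le (c * ∏ k, x k ^ β k)
  have h4 : ∑ i, mu i * y i * ∏ k, x k ^ α i k = ∑ i, mu i * (y i * ∏ k, x k ^ α i k) :=
    Finset.sum_congr rfl fun i _ => mul_assoc _ _ _
  rw [h4]
  linarith

lemma sonc_hit {h : ℕ} (mu v : Fin h → ℝ) (hmu : ∀ i, 0 ≤ mu i)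
    (hv : ∀ i, mu i = 0 → v i = 0) (hneg : ∃ i, v i < 0) :
    ∃ s : ℝ, 0 < s ∧ (∀ i, 0 ≤ mu i + s * v i) ∧ ∃ i, 0 < mu i ∧ mu i + s * v i = 0 := by
  obtain ⟨i0, hi0⟩ := hneg
  obtain ⟨m, hm, hmin⟩ := Finset.exists_min_image (Finset.univ.filter fun i => v i < 0)
    (fun i => mu i / (-v i)) ⟨i0, by simpa using hi0⟩
  have hvm : v m < 0 := by simpa using hm
  have hpos : 0 < mu m := lt_of_le_of_ne (hmu m) fun h0 => hvm.ne (hv m h0.symm)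
  refine ⟨mu m / (-v m), div_pos hpos (by linarith), fun i => ?_, m, hpos, ?_⟩
  · rcases lt_or_ge (v i) 0 with hi | hi
    · have := hmin i (by simpa using hi)
      have hi' : 0 < -v i := by linarith
      rw [le_div_iff₀ hi'] at this
      linarith
    · exact add_nonneg (hmu i) (mul_nonneg (div_pos hpos (by linarith)).le hi)
  · have : v m ≠ 0 := hvm.ne
    field_simp
    ring

lemma sonc_base {n h : ℕ} (α : Fin h → (Fin n →₀ ℕ)) (β : Fin n →₀ ℕ)
    (heven : ∀ i k, Even (α i k)) (y : Fin h → ℝ) (hy : ∀ i, 0 < y i)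
    (mu : Fin h → ℝ) (hmu : ∀ i, 0 ≤ mu i) (hs : ∑ i, mu i = 1)
    (hbar : ∀ k, (β k : ℝ) = ∑ i, mu i * (α i k : ℝ)) (c : ℝ)
    (hind : ∀ v : Fin h → ℝ, (∀ i, mu i = 0 → v i = 0) → ∑ i, v i = 0 →
      (∀ k, ∑ i, v i * (α i k : ℝ) = 0) → v = 0) :
    IsCircuitPoly ((∑ i, monomial (α i) (mu i * y i)) + monomial β c) := by
  classical
  set S : Finset (Fin h) := Finset.univ.filter fun i => mu i ≠ 0 with hS
  have hmem : ∀ i, i ∈ S ↔ mu i ≠ 0 := by simp [hS]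
  have hne : S.Nonempty := by
    by_contra hcon
    rw [Finset.not_nonempty_iff_eq_empty] at hcon
    have : ∀ i, mu i = 0 := fun i => by
      by_contra h0
      have := (hmem i).2 h0
      simp [hcon] at this
    simp [this] at hs
  obtain ⟨r, hr⟩ : ∃ r, S.card = r + 1 := ⟨S.card - 1, by have := hne.card_pos; omega⟩
  let e : Fin (r + 1) ≃ S := (S.equivFinOfCardEq hr).symm
  -- transfer of sums
  have hsum : ∀ {M : Type} [AddCommMonoid M] (f : Fin h → M), (∀ i, mu i = 0 → f i = 0) →
      ∑ j, f (e j) = ∑ i, f i := by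
    intro M _ f hf
    rw [Equiv.sum_comp e (fun i : S => f i), Finset.sum_coe_sort S f]
    refine Finset.sum_subset (Finset.subset_univ _) fun i _ hi => hf i ?_
    by_contra h0
    exact hi ((hmem i).2 h0)
  -- extension of functions
  have hext : ∀ g : Fin (r + 1) → ℝ, ∃ v : Fin h → ℝ, (∀ i, mu i = 0 → v i = 0) ∧
      ∀ j, v (e j) = g j := by
    intro g
    refine ⟨fun i => if hi : i ∈ S then g (e.symm ⟨i, hi⟩) else 0, fun i hi => ?_, fun j => ?_⟩
    · have : i ∉ S := fun hc => (hmem i).1 hc hi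
      simp [this]
    · simp
  have hindg : ∀ g : Fin (r + 1) → ℝ, ∑ j, g j = 0 →
      (∀ k, ∑ j, g j * (α (e j) k : ℝ) = 0) → g = 0 := by
    intro g h1 h2
    obtain ⟨v, hv0, hv⟩ := hext g
    have : v = 0 := by
      refine hind v hv0 ?_ fun k => ?_
      · rw [← hsum v hv0]; simpa [hv] using h1
      · rw [← hsum (fun i => v i * (α i k : ℝ)) (fun i hi => by simp [hv0 i hi])]
        simpa [hv] using h2 k
    funext j
    rw [← hv j, this]; rfl
  have hrn : r ≤ n := by
    have hli : LinearIndependent ℝ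
        (fun j : Fin (r + 1) => (Fin.cons 1 (fun k => (α (e j) k : ℝ)) : Fin (n + 1) → ℝ)) := by
      rw [Fintype.linearIndependent_iff]
      intro g hg
      have : g = 0 := by
        refine hindg g ?_ fun k => ?_
        · simpa [Finset.sum_apply] using congrFun hg 0
        · simpa [Finset.sum_apply] using congrFun hg k.succ
      intro i; rw [this]; rfl
    have := hli.fintype_card_le_finrank
    simp at this
    exact this
  have hpos : ∀ j, 0 < mu (e j) := fun j =>
    lt_of_le_of_ne (hmu _) ((hmem _).1 (e j).2).symm
  have hb' : ∀ k, (β k : ℝ) = ∑ j, mu (e j) * (α (e j) k : ℝ) := fun k => by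
    rw [hbar k, hsum (fun i => mu i * (α i k : ℝ)) (fun i hi => by simp [hi])]
  have hs' : ∑ j, mu (e j) = 1 := by rw [hsum mu (fun i hi => hi), hs]
  refine ⟨r, hrn, fun j => α (e j), β, fun j => mu (e j) * y (e j), c, fun j => mu (e j),
    fun j => mul_pos (hpos j) (hy _), fun j i => heven _ _, hpos, hs', hb', ?_, ?_⟩
  · intro nu _ hnu1 hnu2
    have : nu - (fun j => mu (e j)) = 0 := by
      refine hindg _ ?_ fun k => ?_
      · simp [Finset.sum_sub_distrib, hnu1, hs']
      · simp only [Pi.sub_apply, sub_mul, Finset.sum_sub_distrib]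
        rw [← hnu2 k, ← hb' k, sub_self]
    exact sub_eq_zero.1 this
  · rw [hsum (fun i => (monomial (α i) (mu i * y i) : MvPolynomial (Fin n) ℝ))
      (fun i hi => by simp [hi])]

lemma sonc_main {n h : ℕ} (α : Fin h → (Fin n →₀ ℕ)) (β : Fin n →₀ ℕ)
    (heven : ∀ i k, Even (α i k)) (y : Fin h → ℝ) (hy : ∀ i, 0 < y i) (N : ℕ) :
    ∀ (mu : Fin h → ℝ), (Finset.univ.filter fun i => mu i ≠ 0).card ≤ N →
    (∀ i, 0 ≤ mu i) → ∑ i, mu i = 1 →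
    (∀ k, (β k : ℝ) = ∑ i, mu i * (α i k : ℝ)) → ∀ c : ℝ,
    |c| ≤ ∏ i, y i ^ mu i →
    (∑ i, monomial (α i) (mu i * y i)) + monomial β c ∈ SoncCone n := by
  induction N with
  | zero =>
    intro mu hcard hmu hs
    exfalso
    have h0 : ∀ i, mu i = 0 := by
      simpa [Finset.filter_eq_empty_iff] using hcard
    simp [h0] at hs
  | succ N ih =>
    intro mu hcard hmu hs hbar c hc
    by_cases hind : ∀ v : Fin h → ℝ, (∀ i, mu i = 0 → v i = 0) → ∑ i, v i = 0 →
      (∀ k, ∑ i, v i * (α i k : ℝ) = 0) → v = 0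
    · exact AddSubmonoid.subset_closure (Or.inl
        ⟨sonc_base α β heven y hy mu hmu hs hbar c hind,
          sonc_eval_nonneg α β heven y hy mu hmu hs hbar c hc⟩)
    push Not at hind
    obtain ⟨v, hv0, hvs, hvα, hvne⟩ := hind
    have hneg : ∃ i, v i < 0 := by
      by_contra! hcon
      exact hvne (funext fun i =>
        (Finset.sum_eq_zero_iff_of_nonneg (fun i _ => hcon i)).1 hvs i (Finset.mem_univ i))
    have hneg' : ∃ i, (-v) i < 0 := by
      by_contra! hcon
      have h1 : ∑ i, (-v) i = 0 := by simp [hvs]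
      have := funext fun i =>
        (Finset.sum_eq_zero_iff_of_nonneg (fun i _ => hcon i)).1 h1 i (Finset.mem_univ i)
      exact hvne (neg_eq_zero.1 this)
    obtain ⟨s, hs0, hsn, hsi⟩ := sonc_hit mu v hmu hv0 hneg
    obtain ⟨s', hs0', hsn', hsi'⟩ := sonc_hit mu (-v) hmu (fun i hi => by simp [hv0 i hi]) hneg'
    have step : ∀ (s : ℝ) (w : Fin h → ℝ), (∀ i, mu i = 0 → w i = 0) → ∑ i, w i = 0 →
        (∀ k, ∑ i, w i * (α i k : ℝ) = 0) → (∀ i, 0 ≤ mu i + s * w i) →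
        (∃ i, 0 < mu i ∧ mu i + s * w i = 0) → ∀ c : ℝ, |c| ≤ ∏ i, y i ^ (mu i + s * w i) →
        (∑ i, monomial (α i) ((mu i + s * w i) * y i)) + monomial β c ∈ SoncCone n := by
      intro s w hw0 hws hwα hn hex c hc
      refine ih (fun i => mu i + s * w i) ?_ hn ?_ ?_ c hc
      · obtain ⟨i, hi1, hi2⟩ := hex
        have : (Finset.univ.filter fun i => mu i + s * w i ≠ 0) ⊂
            (Finset.univ.filter fun i => mu i ≠ 0) := by
          rw [Finset.ssubset_iff_of_subset]
          · exact ⟨i, by simpa using hi1.ne', by simpa using hi2⟩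
          · intro j hj
            simp only [Finset.mem_filter, Finset.mem_univ, true_and] at hj ⊢
            intro h0
            exact hj (by rw [h0, hw0 j h0]; simp)
        have := Finset.card_lt_card this
        omega
      · rw [Finset.sum_add_distrib, ← Finset.mul_sum, hws, hs]; simp
      · intro k
        simp only [add_mul, mul_assoc]
        rw [Finset.sum_add_distrib, ← Finset.mul_sum, hwα k, hbar k]; simp
    have step1 := step s v hv0 hvs hvα hsn hsi
    have step2 := step s' (-v) (fun i hi => by simp [hv0 i hi]) (by simp [hvs])
      (fun k => by simp [hvα k]) hsn' hsi'
    set m1 : Fin h → ℝ := fun i => mu i + s * v i with hm1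
    set m2 : Fin h → ℝ := fun i => mu i + s' * (-v) i with hm2
    change ∀ c : ℝ, |c| ≤ ∏ i, y i ^ m1 i →
      (∑ i, monomial (α i) (m1 i * y i)) + monomial β c ∈ SoncCone n at step1
    change ∀ c : ℝ, |c| ≤ ∏ i, y i ^ m2 i →
      (∑ i, monomial (α i) (m2 i * y i)) + monomial β c ∈ SoncCone n at step2
    set A1 := ∏ i, y i ^ m1 i with hA1
    set A2 := ∏ i, y i ^ m2 i with hA2
    have hA1p : 0 < A1 := Finset.prod_pos fun i _ => Real.rpow_pos_of_pos (hy i) _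
    have hA2p : 0 < A2 := Finset.prod_pos fun i _ => Real.rpow_pos_of_pos (hy i) _
    obtain ⟨θ, τ, hθ, hτ, hθτ, hcomb⟩ : ∃ θ τ : ℝ, 0 < θ ∧ 0 < τ ∧ θ + τ = 1 ∧
        ∀ i, θ * m1 i + τ * m2 i = mu i := by
      refine ⟨s' / (s + s'), s / (s + s'), by positivity, by positivity, ?_, fun i => ?_⟩
      · field_simp
        ring
      · simp only [hm1, hm2, Pi.neg_apply]
        field_simp
        ring
    have hmix : ∏ i, y i ^ mu i = A1 ^ θ * A2 ^ τ := by
      rw [hA1, hA2, ← Real.finsetProd_rpow _ _ (fun i _ => Real.rpow_nonneg (hy i).le _),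
        ← Real.finsetProd_rpow _ _ (fun i _ => Real.rpow_nonneg (hy i).le _),
        ← Finset.prod_mul_distrib]
      refine Finset.prod_congr rfl fun i _ => ?_
      rw [← Real.rpow_mul (hy i).le, ← Real.rpow_mul (hy i).le, ← Real.rpow_add (hy i),
        ← hcomb i]
      ring_nf
    have hle := Real.geom_mean_le_arith_mean2_weighted hθ.le hτ.le hA1p.le hA2p.le hθτ
    set D := θ * A1 + τ * A2 with hD
    have hDp : 0 < D := by positivity
    have hcD : |c| ≤ D := hc.trans (hmix.le.trans hle)
    have hbd : ∀ A : ℝ, 0 < A → |c * A / D| ≤ A := by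
      intro A hA
      rw [abs_div, abs_mul, abs_of_pos hA, abs_of_pos hDp, div_le_iff₀ hDp, mul_comm A]
      exact mul_le_mul_of_nonneg_right hcD hA.le
    have f1 := sonc_cone_smul (step1 _ (hbd A1 hA1p)) hθ
    have f2 := sonc_cone_smul (step2 _ (hbd A2 hA2p)) hτ
    have := add_mem f1 f2
    convert this using 1
    simp only [mul_add, Finset.mul_sum, C_mul_monomial]
    rw [add_add_add_comm, ← Finset.sum_add_distrib]
    simp only [← map_add]
    congr 1
    · refine Finset.sum_congr rfl fun i _ => ?_
      rw [← hcomb i]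
      ring_nf
    · congr 1
      have : D ≠ 0 := hDp.ne'
      field_simp
      rw [hD]

/-- (Correctness of the SONC certificate obtained from a
feasible point of the program SONC-simplex.) Let
`p = Σ_{i=0}^{h-1} b_i x^{α(i)} + Σ_{j=0}^{t-h-1} b_{h+j} x^{β(j)}` with
`α(0) = 0`, each `α(i) ∈ (2ℕ)^n`, `b_i > 0`, and each `β(j)` a positive convex
combination `β(j) = Σ_i λ_{i,j} α(i)` with `λ_{i,j} > 0`, `Σ_i λ_{i,j} = 1`.
If `X_{i,j} > 0` satisfies `Σ_j X_{i,j} ≤ b_i` for `1 ≤ i ≤ h-1` and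
`Π_i (X_{i,j}/λ_{i,j})^{λ_{i,j}} ≥ |b_{h+j}|` for all `j`, then with
`γ = Σ_j X_{0,j} - b_0`, the polynomial `p + γ` is a sum of nonnegative
circuit polynomials (plus monomial squares); in particular
`p(x) ≥ b_0 - Σ_j X_{0,j}` for all `x ∈ ℝ^n`. -/
theorem SONC_simplex_certificate
    (n h t : ℕ) (hh : 0 < h) (hht : h < t)
    (α : Fin h → (Fin n →₀ ℕ)) (β : Fin (t - h) → (Fin n →₀ ℕ))
    (b : Fin h → ℝ) (c : Fin (t - h) → ℝ)
    (hα0 : α ⟨0, hh⟩ = 0)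
    (heven : ∀ i k, Even (α i k))
    (hb : ∀ i, 0 < b i)
    (lam : Fin h → Fin (t - h) → ℝ)
    (hlam : ∀ i j, 0 < lam i j)
    (hlamsum : ∀ j, ∑ i, lam i j = 1)
    (hbar : ∀ j k, (β j k : ℝ) = ∑ i, lam i j * (α i k : ℝ))
    (X : Fin h → Fin (t - h) → ℝ)
    (hX : ∀ i j, 0 < X i j)
    (hcons : ∀ i : Fin h, 1 ≤ (i : ℕ) → ∑ j, X i j ≤ b i)
    (hcirc : ∀ j, |c j| ≤ ∏ i, (X i j / lam i j) ^ lam i j) :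
    (∃ (N : ℕ) (q : Fin N → MvPolynomial (Fin n) ℝ),
      (∀ m, (IsCircuitPoly (q m) ∧ ∀ x : Fin n → ℝ, 0 ≤ eval x (q m)) ∨
        IsMonomialSquare (q m)) ∧
      ((∑ i, monomial (α i) (b i)) + ∑ j, monomial (β j) (c j)) +
          C ((∑ j, X ⟨0, hh⟩ j) - b ⟨0, hh⟩) = ∑ m, q m) ∧
    ∀ x : Fin n → ℝ,
      b ⟨0, hh⟩ - ∑ j, X ⟨0, hh⟩ j ≤
        eval x ((∑ i, monomial (α i) (b i)) + ∑ j, monomial (β j) (c j)) := by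

  classical
  have hmem : ((∑ i, monomial (α i) (b i)) + ∑ j, monomial (β j) (c j)) +
          C ((∑ j, X ⟨0, hh⟩ j) - b ⟨0, hh⟩) ∈ SoncCone n := by
    have hj : ∀ j, (∑ i, monomial (α i) (X i j)) + monomial (β j) (c j) ∈ SoncCone n := by
      intro j
      have := sonc_main α (β j) heven (fun i => X i j / lam i j)
        (fun i => div_pos (hX i j) (hlam i j)) _ (fun i => lam i j) le_rfl
        (fun i => (hlam i j).le) (hlamsum j) (hbar j) (c j) (hcirc j)
      convert this using 4 with i
      have := (hlam i j).ne'
      field_simp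
    have hi : ∀ i, monomial (α i) (if i = ⟨0, hh⟩ then 0 else b i - ∑ j, X i j) ∈
        SoncCone n := by
      intro i
      split_ifs with h0
      · rw [monomial_zero]; exact zero_mem _
      · have h1 : 1 ≤ (i : ℕ) := by
          by_contra hcon
          exact h0 (Fin.ext (by simp; omega))
        rcases (sub_nonneg.2 (hcons i h1)).eq_or_lt with h2 | h2
        · rw [← h2, monomial_zero]; exact zero_mem _
        · exact AddSubmonoid.subset_closure (Or.inr ⟨α i, _, h2, heven i, rfl⟩)
    have := add_mem (sum_mem fun j (_ : j ∈ Finset.univ) => hj j)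
      (sum_mem fun i (_ : i ∈ Finset.univ) => hi i)
    convert this using 1
    have hC : (C ((∑ j, X ⟨0, hh⟩ j) - b ⟨0, hh⟩) : MvPolynomial (Fin n) ℝ) =
        ∑ i, monomial (α i) (if i = ⟨0, hh⟩ then (∑ j, X i j) - b i else 0) := by
      rw [Finset.sum_eq_single (⟨0, hh⟩ : Fin h)]
      · rw [if_pos rfl, hα0]; rfl
      · intro i _ hi
        rw [if_neg hi, monomial_zero]
      · simp
    rw [hC, Finset.sum_add_distrib, Finset.sum_comm, add_right_comm,
      add_right_comm (∑ i, ∑ j, monomial (α i) (X i j)),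
      ← Finset.sum_add_distrib, ← Finset.sum_add_distrib]
    congr 1
    refine Finset.sum_congr rfl fun i _ => ?_
    rw [← map_sum, ← map_add, ← map_add]
    congr 1
    split_ifs <;> ring
  constructor
  · obtain ⟨l, hl, hls⟩ := AddSubmonoid.exists_list_of_mem_closure hmem
    refine ⟨l.length, fun m => l.get m, fun m => hl _ (List.get_mem l m), ?_⟩
    rw [← hls]
    simp [Fin.sum_univ_getElem]
  · intro x
    have := sonc_cone_nonneg hmem x
    rw [map_add, eval_C] at this
    linarith
end

section
/- Let p(x) = Σ_{i=0}^{h−1} b_i x^{α(i)} + Σ_{j=0}^{t−h−1} b_{h+j} x^{β(j)} be a polynomial in n real variables with α(0) = 0, α(i) ∈ (2ℕ)^n and b_i > 0 for 0 ≤ i ≤ h−1. Suppose there are ℓ ≥ 1 and, for each k = 1,…,ℓ and each j, numbers b^k_{h+j} ∈ ℝ with Σ_{k=1}^{ℓ} b^k_{h+j} = b_{h+j}, and nonnegative barycentric weights λ^k_{i,j} ≥ 0 with Σ_{i=0}^{h−1} λ^k_{i,j} = 1 and β(j) = Σ_{i=0}^{h−1} λ^k_{i,j} α(i), such that for each (k,j)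 with b^k_{h+j} ≠ 0 the set {α(i) : λ^k_{i,j} > 0} is affinely independent and λ^k_{i,j} > 0 on it. If X^k_{i,j} ≥ 0 (with X^k_{i,j} > 0 whenever λ^k_{i,j} > 0) satisfy Σ_{k=1}^{ℓ} Σ_{j} X^k_{i,j} ≤ b_i for all 1 ≤ i ≤ h−1 and Π_{i : λ^k_{i,j} > 0} (X^k_{i,j}/λ^k_{i,j})^{λ^k_{i,j}} ≥ |b^k_{h+j}| for all k, j, then p(x) ≥ b_0 − Σ_{k=1}^{ℓ} Σ_{j} X^k_{0,j} for all x ∈ ℝ^n. -/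
theorem circuit_aux {n h : ℕ} (α : Fin h → Fin n → ℕ) (β : Fin n → ℕ)
    (heven : ∀ i k, Even (α i k)) (B : ℝ) (lam X : Fin h → ℝ)
    (hlam : ∀ i, 0 ≤ lam i) (hsum : ∑ i, lam i = 1)
    (hbar : ∀ m, (β m : ℝ) = ∑ i, lam i * (α i m : ℝ))
    (hX : ∀ i, 0 ≤ X i)
    (hc : |B| ≤ ∏ i ∈ Finset.univ.filter (fun i : Fin h => 0 < lam i),
          (X i / lam i) ^ lam i) (x : Fin n → ℝ) :
    0 ≤ (∑ i, X i * ∏ m, x m ^ α i m) + B * ∏ m, x m ^ β m := by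
  have hmon : ∀ i, ∏ m, x m ^ α i m = ∏ m, |x m| ^ α i m := fun i =>
    Finset.prod_congr rfl fun m _ => ((heven i m).pow_abs (x m)).symm
  have hmon0 : ∀ i, 0 ≤ ∏ m, x m ^ α i m := fun i => by
    rw [hmon]; positivity
  have hβ : |∏ m, x m ^ β m| = ∏ i, (∏ m, x m ^ α i m) ^ lam i := by
    rw [Finset.abs_prod]
    have h1 : ∀ m, |x m ^ β m| = ∏ i, (|x m| ^ α i m) ^ lam i := fun m => by
      rw [abs_pow, ← Real.rpow_natCast, hbar m, Real.rpow_sum_of_nonneg (abs_nonneg _)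
        (fun i _ => mul_nonneg (hlam i) (Nat.cast_nonneg _))]
      refine Finset.prod_congr rfl fun i _ => ?_
      rw [mul_comm, Real.rpow_mul (abs_nonneg _), Real.rpow_natCast]
    simp_rw [h1]
    rw [Finset.prod_comm]
    refine Finset.prod_congr rfl fun i _ => ?_
    rw [hmon, Real.finsetProd_rpow]
    intro m _; positivity
  have hprod : ∏ i ∈ Finset.univ.filter (fun i : Fin h => 0 < lam i),
      (X i / lam i) ^ lam i = ∏ i, (X i / lam i) ^ lam i := by
    refine Finset.prod_subset (Finset.subset_univ _) fun i _ hi => ?_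
    have : lam i = 0 := le_antisymm (by simpa using hi) (hlam i)
    simp [this]
  rw [hprod] at hc
  have hdiv : ∀ i, 0 ≤ X i / lam i := fun i => div_nonneg (hX i) (hlam i)
  have key : |B * ∏ m, x m ^ β m| ≤ ∑ i, X i * ∏ m, x m ^ α i m := by
    calc |B * ∏ m, x m ^ β m|
        ≤ (∏ i, (X i / lam i) ^ lam i) * ∏ i, (∏ m, x m ^ α i m) ^ lam i := by
          rw [abs_mul, ← hβ]
          exact mul_le_mul_of_nonneg_right hc (abs_nonneg _)
      _ = ∏ i, (X i / lam i * ∏ m, x m ^ α i m) ^ lam i := by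
          rw [← Finset.prod_mul_distrib]
          exact Finset.prod_congr rfl fun i _ => (Real.mul_rpow (hdiv i) (hmon0 i)).symm
      _ ≤ ∑ i, lam i * (X i / lam i * ∏ m, x m ^ α i m) :=
          Real.geom_mean_le_arith_mean_weighted _ _ _ (fun i _ => hlam i) hsum
            (fun i _ => mul_nonneg (hdiv i) (hmon0 i))
      _ ≤ ∑ i, X i * ∏ m, x m ^ α i m := by
          refine Finset.sum_le_sum fun i _ => ?_
          rw [← mul_assoc]
          refine mul_le_mul_of_nonneg_right ?_ (hmon0 i)
          rcases (hlam i).eq_or_lt with h0 | h0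
          · rw [← h0]; simpa using hX i
          · rw [mul_div_cancel₀ _ h0.ne']
  linarith [neg_abs_le (B * ∏ m, x m ^ β m)]

/-- (Correctness of the SONC lower bound obtained from a
feasible point of the program GP-SONC, for a cover of the Newton polytope by
`ℓ` simplices.) Let
`p = Σ_{i=0}^{h-1} b_i x^{α(i)} + Σ_{j=0}^{t-h-1} b_{h+j} x^{β(j)}` with
`α(0) = 0`, `α(i) ∈ (2ℕ)^n`, `b_i > 0`. Suppose each negative coefficient
`b_{h+j}` is distributed as `b_{h+j} = Σ_{k=1}^ℓ b^k_{h+j}`, with nonnegative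
barycentric weights `λ^k_{i,j}` (summing to `1` over `i`, representing `β(j)`
as a combination of the `α(i)`), such that whenever `b^k_{h+j} ≠ 0` the points
`{α(i) : λ^k_{i,j} > 0}` are affinely independent. If `X^k_{i,j} ≥ 0` (with
`X^k_{i,j} > 0` whenever `λ^k_{i,j} > 0`) satisfy
`Σ_k Σ_j X^k_{i,j} ≤ b_i` for all `1 ≤ i ≤ h-1` and
`Π_{i : λ^k_{i,j}>0} (X^k_{i,j}/λ^k_{i,j})^{λ^k_{i,j}} ≥ |b^k_{h+j}|` for all
`k, j`, then `p(x) ≥ b_0 - Σ_k Σ_j X^k_{0,j}` for all `x ∈ ℝ^n`. -/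
theorem GP_SONC_lower_bound
    (n h t l : ℕ) (hh : 0 < h) (hht : h < t) (hl : 1 ≤ l)
    (α : Fin h → Fin n → ℕ) (β : Fin (t - h) → Fin n → ℕ)
    (b : Fin h → ℝ) (c : Fin (t - h) → ℝ)
    (hα0 : ∀ k, α ⟨0, hh⟩ k = 0)
    (heven : ∀ i k, Even (α i k))
    (hb : ∀ i, 0 < b i)
    (bs : Fin l → Fin (t - h) → ℝ)
    (hbs : ∀ j, ∑ k, bs k j = c j)
    (lam : Fin l → Fin h → Fin (t - h) → ℝ)
    (hlam : ∀ k i j, 0 ≤ lam k i j)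
    (hlamsum : ∀ k j, ∑ i, lam k i j = 1)
    (hbar : ∀ k j m, (β j m : ℝ) = ∑ i, lam k i j * (α i m : ℝ))
    (haff : ∀ k j, bs k j ≠ 0 →
      AffineIndependent ℝ
        (fun i : {i : Fin h // 0 < lam k i j} => fun m => (α i.1 m : ℝ)))
    (X : Fin l → Fin h → Fin (t - h) → ℝ)
    (hXnn : ∀ k i j, 0 ≤ X k i j)
    (hXpos : ∀ k i j, 0 < lam k i j → 0 < X k i j)
    (hcons : ∀ i : Fin h, 1 ≤ (i : ℕ) → ∑ k, ∑ j, X k i j ≤ b i)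
    (hcirc : ∀ k j,
      |bs k j| ≤
        ∏ i ∈ Finset.univ.filter (fun i : Fin h => 0 < lam k i j),
          (X k i j / lam k i j) ^ lam k i j) :
    ∀ x : Fin n → ℝ,
      b ⟨0, hh⟩ - ∑ k, ∑ j, X k ⟨0, hh⟩ j ≤
        (∑ i, b i * ∏ m, x m ^ α i m) + ∑ j, c j * ∏ m, x m ^ β j m := by
  intro x
  have hmon0 : ∀ i, 0 ≤ ∏ m, x m ^ α i m := fun i =>
    Finset.prod_nonneg fun m _ => (heven i m).pow_nonneg _
  have h1 : 0 ≤ ∑ k, ∑ j, ((∑ i, X k i j * ∏ m, x m ^ α i m) + bs k j * ∏ m, x m ^ β j m) :=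
    Finset.sum_nonneg fun k _ => Finset.sum_nonneg fun j _ =>
      circuit_aux α (β j) heven (bs k j) (fun i => lam k i j) (fun i => X k i j)
        (fun i => hlam k i j) (hlamsum k j) (hbar k j) (fun i => hXnn k i j) (hcirc k j) x
  have h2 : ∑ k, ∑ j, ((∑ i, X k i j * ∏ m, x m ^ α i m) + bs k j * ∏ m, x m ^ β j m)
      = (∑ i, (∑ k, ∑ j, X k i j) * ∏ m, x m ^ α i m) + ∑ j, c j * ∏ m, x m ^ β j m := by
    simp_rw [Finset.sum_add_distrib]
    congr 1
    · simp_rw [Finset.sum_mul]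
      rw [Finset.sum_comm (s := (Finset.univ : Finset (Fin h)))]
      refine Finset.sum_congr rfl fun k _ => ?_
      rw [Finset.sum_comm]
    · rw [Finset.sum_comm]
      refine Finset.sum_congr rfl fun j _ => ?_
      rw [← Finset.sum_mul, hbs]
  have h3 : b ⟨0, hh⟩ - ∑ k, ∑ j, X k ⟨0, hh⟩ j
      ≤ ∑ i, (b i - ∑ k, ∑ j, X k i j) * ∏ m, x m ^ α i m := by
    rw [← Finset.add_sum_erase _ _ (Finset.mem_univ (⟨0, hh⟩ : Fin h))]
    have h4 : ∏ m, x m ^ α ⟨0, hh⟩ m = 1 := by simp [hα0]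
    rw [h4, mul_one]
    refine le_add_of_nonneg_right (Finset.sum_nonneg fun i hi => ?_)
    refine mul_nonneg (sub_nonneg.2 (hcons i ?_)) (hmon0 i)
    have : (i : ℕ) ≠ 0 := fun h0 => (Finset.mem_erase.1 hi).1 (Fin.ext h0)
    omega
  simp_rw [sub_mul, Finset.sum_sub_distrib] at h3
  linarith
end
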